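/- Normalized pressure decay. For every M > 0 and every integer k ≥ 0 there exists a constant c(k,M) such that: if R₀ > 0, (u,p) is a smooth solution of the steady Navier–Stokes equations on ℝ³ \ closedBall(0,R₀) and |u(x)| ≤ C*/(R₀+|x|) on ℝ³ \ closedBall(0,R₀) for some C* ≤ M, then there exists a constant p₀ ∈ ℝ such that the normalized pressure p − p₀ satisfies |∇^k (p − p₀)(x)| ≤ c(k,M) C*/(R₀+|x|)^{k+2} for all x with |x| ≥ 2R₀. -/

import Mathlib

open MeasureTheory Real Metric Filter

noncomputable section

abbrev E3 : Type := EuclideanSpace ℝ (Fin 3)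

def ee (j : Fin 3) : E3 := EuclideanSpace.single j 1

def pd (f : E3 → ℝ) (j : Fin 3) (x : E3) : ℝ := fderiv ℝ f x (ee j)

def pd2 (f : E3 → ℝ) (j : Fin 3) (x : E3) : ℝ :=
  fderiv ℝ (fun y => fderiv ℝ f y (ee j)) x (ee j)

/-- steady Navier–Stokes system on `s` -/
def IsNS (s : Set E3) (u : E3 → E3) (p : E3 → ℝ) : Prop :=
  (∀ x ∈ s, ∀ i, -(∑ j, pd2 (fun y => u y i) j x)
      + (∑ j, u x j * pd (fun y => u y i) j x) + pd p i x = 0)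
  ∧ ∀ x ∈ s, (∑ j, pd (fun y => u y j) j x) = 0

/-!
The pressure gradient is controlled locally by the velocity without any potential theory. The
vorticity `ω = Dv - (Dv)ᵀ` satisfies `|Δ v| ≤ n |Dω|` and `|Δ ω| ≤ |Dω| |v| + 2 |Dv|²`. Applying
the interior gradient estimate `|Df(x)| ≤ n sup |f| / r + r sup |Δ f| / 2` at the small scale
`r = τ d`, where `d` is the distance to the boundary, to `v` and to `ω` couples the weighted norms
`a = sup d |Dv|` and `b = sup d² |Dω|`; choosing `τ` well in both inequalities gives
`a + b ≤ C(M) sup |v|` on the unit ball if `sup |v| ≤ M`, and the momentum equation then bounds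
`∇p = Δ v - (v · ∇) v` linearly in `sup |v|` as well.

Since `Δ p = -tr (Dv)²`, the pair `U = (v, p)` solves a system `Δ U = N (U, DU)` with `N` smooth and
`N 0 = 0`. Such systems are inherited by `(U, DU)`, so the interior gradient estimate iterates to
bounds on all derivatives, still linear in `sup |v|`. Rescaling to the ball of radius
`(R + |x|) / 6` about `x` gives the decay of `∇^k p` for `k ≥ 1`. Finally `|∇p| = O(|x|⁻³)`
makes `p` converge at infinity, with rate `O(|x|⁻²)`, to a constant `p₀`.
-/

open InnerProductSpace Set Module
open scoped ContDiff Topology RealInnerProductSpace Laplacian Gradient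

section Derivatives

variable {E F G : Type*} [NormedAddCommGroup E] [NormedSpace ℝ E]
  [NormedAddCommGroup F] [NormedSpace ℝ F] [NormedAddCommGroup G] [NormedSpace ℝ G]

theorem hasFDerivAt_fderiv {f : E → F} {x : E} (hf : ContDiffAt ℝ 2 f x) :
    HasFDerivAt (fderiv ℝ f) (fderiv ℝ (fderiv ℝ f) x) x :=
  ((hf.fderiv_right (m := 1) (by norm_num)).differentiableAt one_ne_zero).hasFDerivAt

theorem contDiffAt_comp_add_smul {f : E → F} {x₀ z : E} {r : ℝ} {n : WithTop ℕ∞}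
    (hf : ContDiffAt ℝ n f (x₀ + r • z)) : ContDiffAt ℝ n (fun y => f (x₀ + r • y)) z :=
  hf.comp z (by fun_prop)

theorem fderiv_comp_add_smul (f : E → F) (x₀ : E) (r : ℝ) (z : E) :
    fderiv ℝ (fun y => f (x₀ + r • y)) z = r • fderiv ℝ f (x₀ + r • z) := by
  rw [fderiv_comp_smul (f := fun y => f (x₀ + y)), fderiv_comp_add_left]

theorem iteratedFDeriv_comp_continuousLinearEquiv (L : E ≃L[ℝ] G) (f : G → F) (k : ℕ) (x : E) :
    iteratedFDeriv ℝ k (fun y => f (L y)) x =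
      (iteratedFDeriv ℝ k f (L x)).compContinuousLinearMap fun _ => L := by
  simpa [iteratedFDerivWithin_univ, Function.comp_def] using
    L.iteratedFDerivWithin_comp_right f uniqueDiffOn_univ (mem_univ (L x)) k

theorem iteratedFDeriv_comp_add_smul (f : E → F) (x₀ : E) {r : ℝ} (hr : r ≠ 0) (k : ℕ) (z : E) :
    iteratedFDeriv ℝ k (fun y => f (x₀ + r • y)) z = r ^ k • iteratedFDeriv ℝ k f (x₀ + r • z) := by
  have h := iteratedFDeriv_comp_continuousLinearEquiv
    (ContinuousLinearEquiv.smulLeft (Units.mk0 r hr)) (fun y => f (x₀ + y)) k z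
  rw [iteratedFDeriv_comp_add_left] at h
  refine h.trans ?_
  ext m
  exact (iteratedFDeriv ℝ k f (x₀ + r • z)).map_smul_univ (fun _ => r) m |>.trans (by simp)

theorem norm_iteratedFDeriv_le_prodMk {f : E → F} {g : E → G} {x : E} {k : ℕ}
    (hf : ContDiffAt ℝ k f x) (hg : ContDiffAt ℝ k g x) :
    ‖iteratedFDeriv ℝ k g x‖ ≤ ‖iteratedFDeriv ℝ k (fun y => (f y, g y)) x‖ := by
  rw [iteratedFDeriv_prodMk hf hg le_rfl, ContinuousMultilinearMap.opNorm_prod]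
  exact le_max_right _ _

theorem norm_iteratedFDeriv_succ_sub_const (f : E → F) (c : F) (k : ℕ) (x : E) :
    ‖iteratedFDeriv ℝ (k + 1) (fun y => f y - c) x‖ = ‖iteratedFDeriv ℝ (k + 1) f x‖ := by
  have hD : fderiv ℝ (fun y => f y - c) = fderiv ℝ f := funext fun _ => fderiv_sub_const c
  rw [← norm_iteratedFDeriv_fderiv, hD, norm_iteratedFDeriv_fderiv]

end Derivatives

section Laplacian

variable {E F G : Type*} [NormedAddCommGroup E] [InnerProductSpace ℝ E] [FiniteDimensional ℝ E]
  [NormedAddCommGroup F] [NormedSpace ℝ F] [NormedAddCommGroup G] [NormedSpace ℝ G]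
  {f : E → F} {g : E → G} {x : E}

theorem laplacian_eq_sum_fderiv_fderiv {ι : Type*} [Fintype ι] (b : OrthonormalBasis ι ℝ E)
    (f : E → F) (x : E) : Δ f x = ∑ i, fderiv ℝ (fderiv ℝ f) x (b i) (b i) := by
  simp [laplacian_eq_iteratedFDeriv_orthonormalBasis f b, iteratedFDeriv_two_apply]

theorem laplacian_prodMk (hf : ContDiffAt ℝ 2 f x) (hg : ContDiffAt ℝ 2 g x) :
    Δ (fun y => (f y, g y)) x = (Δ f x, Δ g x) := by
  have h := hf.prodMk hg
  exact Prod.ext (h.laplacian_CLM_comp_left (l := .fst ℝ F G)).symm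
    (h.laplacian_CLM_comp_left (l := .snd ℝ F G)).symm

theorem laplacian_fderiv (hf : ContDiffAt ℝ 3 f x) : Δ (fderiv ℝ f) x = fderiv ℝ (Δ f) x := by
  set b := stdOrthonormalBasis ℝ E
  have hDf : ContDiffAt ℝ 2 (fderiv ℝ f) x := hf.fderiv_right (by norm_num)
  have hD3 (v w : E) : HasFDerivAt (fun y => fderiv ℝ (fderiv ℝ f) y v w)
      (((fderiv ℝ (fderiv ℝ (fderiv ℝ f)) x).flip v).flip w) x := by
    simpa using ((hasFDerivAt_fderiv hDf).clm_apply (hasFDerivAt_const v x)).clm_apply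
      (hasFDerivAt_const w x)
  have hswap₁₂ (v w : E) : fderiv ℝ (fderiv ℝ (fderiv ℝ f)) x v w =
      fderiv ℝ (fderiv ℝ (fderiv ℝ f)) x w v := hDf.isSymmSndFDerivAt (by simp) v w
  have hswap₂₃ (v w z : E) : fderiv ℝ (fderiv ℝ (fderiv ℝ f)) x z v w =
      fderiv ℝ (fderiv ℝ (fderiv ℝ f)) x z w v := by
    have hsymm : (fun y => fderiv ℝ (fderiv ℝ f) y v w) =ᶠ[𝓝 x]
        fun y => fderiv ℝ (fderiv ℝ f) y w v :=
      (hf.eventually (by simp)).mono fun y hy =>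
        hy.isSymmSndFDerivAt (by norm_num) v w
    exact congr($((hD3 v w).unique ((hD3 w v).congr_of_eventuallyEq hsymm)) z)
  have hΔ : HasFDerivAt (Δ f) (∑ i, ((fderiv ℝ (fderiv ℝ (fderiv ℝ f)) x).flip (b i)).flip (b i))
      x := by
    rw [funext (laplacian_eq_sum_fderiv_fderiv b f)]
    exact .fun_sum fun i _ => hD3 (b i) (b i)
  ext z
  simp only [laplacian_eq_sum_fderiv_fderiv b, hΔ.fderiv, FunLike.coe_sum, Finset.sum_apply,
    ContinuousLinearMap.flip_apply]
  exact Finset.sum_congr rfl fun i _ => by rw [hswap₂₃, hswap₁₂]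

theorem laplacian_comp_linearIsometryEquiv (f : E → F) (σ : E ≃ₗᵢ[ℝ] E) (x : E) :
    Δ (fun y => f (σ y)) x = Δ f (σ x) := by
  set b := stdOrthonormalBasis ℝ E
  have h := iteratedFDeriv_comp_continuousLinearEquiv σ.toContinuousLinearEquiv f 2 x
  simp only [LinearIsometryEquiv.coe_toContinuousLinearEquiv] at h
  rw [laplacian_eq_iteratedFDeriv_orthonormalBasis _ b,
    laplacian_eq_iteratedFDeriv_orthonormalBasis _ (b.map σ)]
  refine Finset.sum_congr rfl fun i _ => ?_
  rw [h, ContinuousMultilinearMap.compContinuousLinearMap_apply]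
  congr 1
  ext j
  fin_cases j <;> simp

theorem laplacian_comp_add_smul (f : E → F) (x₀ : E) {r : ℝ} (hr : r ≠ 0) (z : E) :
    Δ (fun y => f (x₀ + r • y)) z = r ^ 2 • Δ f (x₀ + r • z) := by
  simp [laplacian_eq_iteratedFDeriv_stdOrthonormalBasis, iteratedFDeriv_comp_add_smul f x₀ hr,
    Finset.smul_sum]

end Laplacian

section MaximumPrinciple

theorem fderiv_fderiv_nonpos_of_isLocalMax {E : Type*} [NormedAddCommGroup E] [NormedSpace ℝ E]
    {w : E → ℝ} {x : E} (hw : ContDiffAt ℝ 2 w x) (hmax : IsLocalMax w x) (v : E) :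
    fderiv ℝ (fderiv ℝ w) x v v ≤ 0 := by
  by_contra! hpos
  set γ : ℝ → E := fun t => x + t • v
  have hγ0 : γ 0 = x := by simp [γ]
  have hγ (t : ℝ) : HasDerivAt γ v t := by
    simpa [γ] using ((hasDerivAt_id t).smul_const v).const_add x
  have htend : Tendsto γ (𝓝 0) (𝓝 x) := hγ0 ▸ (hγ 0).continuousAt.tendsto
  have hd1 : deriv (w ∘ γ) =ᶠ[𝓝 0] fun t => fderiv ℝ w (γ t) v :=
    (htend.eventually (hw.eventually (by simp))).mono fun t ht =>
      ((ht.differentiableAt two_ne_zero).hasFDerivAt.comp_hasDerivAt t (hγ t)).deriv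
  have hd2 : deriv (deriv (w ∘ γ)) 0 = fderiv ℝ (fderiv ℝ w) x v v := by
    have hDw : DifferentiableAt ℝ (fderiv ℝ w) (γ 0) :=
      hγ0 ▸ (hw.fderiv_right (m := 1) (by norm_num)).differentiableAt one_ne_zero
    rw [hd1.deriv_eq]
    simpa [hγ0] using ((hDw.hasFDerivAt.comp_hasDerivAt (0 : ℝ) (hγ 0)).clm_apply
      (hasDerivAt_const (0 : ℝ) v)).deriv
  have hmax' : IsLocalMax (w ∘ γ) 0 := by
    simpa [IsLocalMax, IsMaxFilter, hγ0] using htend.eventually hmax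
  have hmin' : IsLocalMin (w ∘ γ) 0 :=
    isLocalMin_of_deriv_deriv_pos (hd2 ▸ hpos) hmax'.deriv_eq_zero
      (hw.continuousAt.comp_of_eq (hγ 0).continuousAt hγ0)
  have hconst : w ∘ γ =ᶠ[𝓝 0] fun _ => w x := by
    filter_upwards [hmax', hmin'] with t h₁ h₂ using by simpa [hγ0] using le_antisymm h₁ h₂
  have hzero : deriv (deriv (w ∘ γ)) 0 = 0 := by simp [hconst.deriv.deriv_eq]
  exact hpos.ne' (hd2 ▸ hzero)

variable {E : Type*} [NormedAddCommGroup E] [InnerProductSpace ℝ E] [FiniteDimensional ℝ E]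
  {w : E → ℝ}

theorem laplacian_nonpos_of_isLocalMax {x : E} (hw : ContDiffAt ℝ 2 w x) (hmax : IsLocalMax w x) :
    Δ w x ≤ 0 := by
  rw [laplacian_eq_sum_fderiv_fderiv (stdOrthonormalBasis ℝ E)]
  exact Finset.sum_nonpos fun i _ => fderiv_fderiv_nonpos_of_isLocalMax hw hmax _

theorem le_of_laplacian_pos_of_le_frontier {K : Set E} {c : ℝ} (hK : IsCompact K)
    (hcont : ContinuousOn w K) (hw : ∀ x ∈ interior K, ContDiffAt ℝ 2 w x)
    (hΔ : ∀ x ∈ interior K, 0 < Δ w x) (hc : ∀ x ∈ frontier K, w x ≤ c) {x : E} (hx : x ∈ K) :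
    w x ≤ c := by
  obtain ⟨z, hzK, hz⟩ := hK.exists_isMaxOn ⟨x, hx⟩ hcont
  refine (hz hx).trans (hc z ⟨subset_closure hzK, fun hzint => (hΔ z hzint).not_ge ?_⟩)
  exact laplacian_nonpos_of_isLocalMax (hw z hzint)
    (hz.isLocalMax (mem_interior_iff_mem_nhds.1 hzint))

end MaximumPrinciple

section HalfBall

variable {E : Type*} [NormedAddCommGroup E] [InnerProductSpace ℝ E] {e : E} {A N : ℝ}

/-- A barrier on the half ball `{‖x‖ ≤ 1, 0 ≤ ⟪e, x⟫}`, `‖e‖ = 1`: it vanishes at the origin,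
dominates `A` on the spherical part of the boundary and has Laplacian `-N`. -/
def halfBallBarrier (e : E) (A N : ℝ) (x : E) : ℝ :=
  A * ‖x‖ ^ 2 + (finrank ℝ E * A + N / 2) * (⟪e, x⟫ - ⟪e, x⟫ ^ 2)

theorem contDiff_halfBallBarrier : ContDiff ℝ ∞ (halfBallBarrier e A N) := by
  have hs : ContDiff ℝ ∞ fun x : E => ⟪e, x⟫ := (innerSL ℝ e).contDiff
  exact (contDiff_const.mul (contDiff_norm_sq ℝ)).add (contDiff_const.mul (hs.sub (hs.pow 2)))

theorem hasFDerivAt_halfBallBarrier (x : E) :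
    HasFDerivAt (halfBallBarrier e A N) ((2 * A) • innerSL ℝ x +
      ((finrank ℝ E * A + N / 2) * (1 - 2 * ⟪e, x⟫)) • innerSL ℝ e) x := by
  have hs : HasFDerivAt (fun y : E => ⟪e, y⟫) (innerSL ℝ e) x := (innerSL ℝ e).hasFDerivAt
  refine (((hasStrictFDerivAt_norm_sq x).hasFDerivAt.const_mul A).add
    ((hs.sub (hs.pow 2)).const_mul (finrank ℝ E * A + N / 2))).congr_fderiv ?_
  ext v
  simp
  ring

theorem laplacian_halfBallBarrier [FiniteDimensional ℝ E] (he : ‖e‖ = 1) (x : E) :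
    Δ (halfBallBarrier e A N) x = -N := by
  set b := stdOrthonormalBasis ℝ E
  have hb : ∑ i, ⟪e, b i⟫ ^ 2 = 1 := by simp [b.sum_sq_inner_left, he]
  have hs : HasFDerivAt (fun y : E => ⟪e, y⟫) (innerSL ℝ e) x := (innerSL ℝ e).hasFDerivAt
  let B : E →L[ℝ] E →L[ℝ] ℝ := innerSL ℝ
  have hB (v w : E) : B v w = ⟪v, w⟫ := rfl
  have hD2 : HasFDerivAt (fderiv ℝ (halfBallBarrier e A N)) ((2 * A) • B +
      ((finrank ℝ E * A + N / 2) • -((2 : ℝ) • B e)).smulRight (B e)) x := by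
    rw [funext fun y => (hasFDerivAt_halfBallBarrier (e := e) (A := A) (N := N) y).fderiv]
    exact (B.hasFDerivAt.const_smul (2 * A)).add
      ((((hs.const_mul 2).const_sub 1).const_mul (finrank ℝ E * A + N / 2)).smul_const (B e))
  calc Δ (halfBallBarrier e A N) x
      = ∑ i, (2 * A - (2 * (finrank ℝ E * A) + N) * ⟪e, b i⟫ ^ 2) := by
        rw [laplacian_eq_sum_fderiv_fderiv b, hD2.fderiv]
        refine Finset.sum_congr rfl fun i _ => ?_
        simp [hB]
        ring
    _ = -N := by
        rw [Finset.sum_sub_distrib, ← Finset.mul_sum _ _ (2 * (finrank ℝ E * A) + N), hb]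
        simp
        ring

theorem sq_norm_le_halfBallBarrier (hA : 0 ≤ A) (hN : 0 ≤ N) (he : ‖e‖ = 1) {x : E} (hx : ‖x‖ ≤ 1)
    (hex : 0 ≤ ⟪e, x⟫) : A * ‖x‖ ^ 2 ≤ halfBallBarrier e A N x := by
  have h1 : ⟪e, x⟫ ≤ 1 := (real_inner_le_norm e x).trans (by simpa [he])
  have h2 : 0 ≤ ⟪e, x⟫ - ⟪e, x⟫ ^ 2 := by nlinarith
  exact le_add_of_nonneg_right (by positivity)

theorem fderiv_zero_sub_comp_reflection {f : E → ℝ} (hf : DifferentiableAt ℝ f 0) (e : E) :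
    fderiv ℝ (f - fun y => f ((ℝ ∙ e)ᗮ.reflection y)) 0 e = 2 * fderiv ℝ f 0 e := by
  set σ : E ≃ₗᵢ[ℝ] E := (ℝ ∙ e)ᗮ.reflection
  have hDfσ : HasFDerivAt (fun y => f (σ y)) _ 0 :=
    HasFDerivAt.comp (g := f) (0 : E) (by simpa using hf.hasFDerivAt)
      σ.toContinuousLinearEquiv.hasFDerivAt
  have hσe : σ e = -e := Submodule.reflection_orthogonalComplement_singleton_eq_neg e
  rw [(hf.hasFDerivAt.sub hDfσ).fderiv]
  simp [hσe]
  ring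

variable [FiniteDimensional ℝ E]

theorem le_halfBallBarrier {φ : E → ℝ} (hA : 0 ≤ A) (hN : 0 ≤ N) (he : ‖e‖ = 1)
    (hφ : ∀ x ∈ closedBall (0 : E) 1, ContDiffAt ℝ 2 φ x)
    (hφA : ∀ x ∈ closedBall (0 : E) 1, φ x ≤ A)
    (hφN : ∀ x ∈ closedBall (0 : E) 1, -N < Δ φ x)
    (hφ0 : ∀ x ∈ closedBall (0 : E) 1, ⟪e, x⟫ = 0 → φ x = 0)
    {x : E} (hx : x ∈ closedBall (0 : E) 1) (hex : 0 ≤ ⟪e, x⟫) :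
    φ x ≤ halfBallBarrier e A N x := by
  set K : Set E := closedBall 0 1 ∩ {x | 0 ≤ ⟪e, x⟫}
  have hH : IsClosed {x : E | 0 ≤ ⟪e, x⟫} := isClosed_le continuous_const (by fun_prop)
  have hK : IsCompact K := (isCompact_closedBall 0 1).inter_right hH
  have hw (y : E) (hy : y ∈ K) : ContDiffAt ℝ 2 (φ - halfBallBarrier e A N) y :=
    (hφ y hy.1).sub (contDiff_halfBallBarrier.of_le (by norm_cast)).contDiffAt
  refine sub_nonpos.1 (le_of_laplacian_pos_of_le_frontier (w := φ - halfBallBarrier e A N) hK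
    (fun y hy => (hw y hy).continuousAt.continuousWithinAt)
    (fun y hy => hw y (interior_subset hy)) (fun y hy => ?_) (fun y hy => ?_) ⟨hx, hex⟩)
  · have hy' := (interior_subset hy).1
    rw [(hφ y hy').laplacian_sub
      (contDiff_halfBallBarrier.of_le (by norm_cast)).contDiffAt,
      laplacian_halfBallBarrier he]
    linarith [hφN y hy']
  · have hyK : y ∈ K := hK.isClosed.frontier_subset hy
    have hbar := sq_norm_le_halfBallBarrier hA hN he (mem_closedBall_zero_iff.1 hyK.1) hyK.2
    refine sub_nonpos.2 ?_
    rcases frontier_inter_subset _ _ hy with ⟨hy, -⟩ | ⟨-, hy⟩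
    · have hy1 : ‖y‖ = 1 := by simpa using frontier_closedBall_subset_sphere hy
      exact (hφA y hyK.1).trans (by simpa [hy1] using hbar)
    · have hy0 : 0 = ⟪e, y⟫ := frontier_le_subset_eq continuous_const (by fun_prop) hy
      exact (hφ0 y hyK.1 hy0.symm).trans_le (le_trans (by positivity) hbar)

theorem fderiv_zero_le_of_eq_zero_on_hyperplane {φ : E → ℝ} (hA : 0 ≤ A) (hN : 0 ≤ N)
    (he : ‖e‖ = 1) (hφ : ∀ x ∈ closedBall (0 : E) 1, ContDiffAt ℝ 2 φ x)
    (hφA : ∀ x ∈ closedBall (0 : E) 1, φ x ≤ A)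
    (hφN : ∀ x ∈ closedBall (0 : E) 1, -N < Δ φ x)
    (hφ0 : ∀ x ∈ closedBall (0 : E) 1, ⟪e, x⟫ = 0 → φ x = 0) :
    fderiv ℝ φ 0 e ≤ finrank ℝ E * A + N / 2 := by
  have h0 : (0 : E) ∈ closedBall (0 : E) 1 := by simp
  set K : Set E := closedBall 0 1 ∩ {x | 0 ≤ ⟪e, x⟫}
  have hmax : IsMaxOn (φ - halfBallBarrier e A N) K 0 := fun x hx => by
    simpa [halfBallBarrier, hφ0 0 h0] using le_halfBallBarrier hA hN he hφ hφA hφN hφ0 hx.1 hx.2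
  have hcone : e ∈ posTangentConeAt K 0 := by
    refine mem_posTangentConeAt_of_segment_subset (((convex_closedBall 0 1).inter
      (convex_halfSpace_ge (innerSL ℝ e).isLinear 0)).segment_subset ?_ ?_)
    all_goals simp [he]
  have hder := ((hφ 0 h0).differentiableAt two_ne_zero).hasFDerivAt.sub
    (hasFDerivAt_halfBallBarrier (e := e) (A := A) (N := N) 0)
  have := hmax.localize.hasFDerivWithinAt_nonpos hder.hasFDerivWithinAt hcone
  simpa [he] using this

-- The odd part of `f` under reflection in the hyperplane `eᗮ` vanishes on the hyperplane,
-- satisfies the same bounds and has the same derivative along `e`.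
theorem fderiv_zero_le_of_abs_laplacian_lt {f : E → ℝ} (he : ‖e‖ = 1)
    (hf : ∀ x ∈ closedBall (0 : E) 1, ContDiffAt ℝ 2 f x)
    (hfA : ∀ x ∈ closedBall (0 : E) 1, |f x| ≤ A)
    (hfN : ∀ x ∈ closedBall (0 : E) 1, |Δ f x| < N) :
    fderiv ℝ f 0 e ≤ finrank ℝ E * A + N / 2 := by
  have h0 : (0 : E) ∈ closedBall (0 : E) 1 := by simp
  set σ : E ≃ₗᵢ[ℝ] E := (ℝ ∙ e)ᗮ.reflection
  have hσ (x : E) (hx : x ∈ closedBall (0 : E) 1) : σ x ∈ closedBall (0 : E) 1 := by simpa using hx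
  have hfσ (x : E) (hx : x ∈ closedBall (0 : E) 1) : ContDiffAt ℝ 2 (fun y => f (σ y)) x :=
    (hf _ (hσ x hx)).comp x σ.contDiff.contDiffAt
  set φ : E → ℝ := (2⁻¹ : ℝ) • (f - fun y => f (σ y))
  have hsub (x : E) (hx : x ∈ closedBall (0 : E) 1) : ContDiffAt ℝ 2 (f - fun y => f (σ y)) x :=
    (hf x hx).sub (hfσ x hx)
  have hφ (x : E) (hx : x ∈ closedBall (0 : E) 1) : ContDiffAt ℝ 2 φ x :=
    contDiffAt_const.smul (hsub x hx)
  have hΔφ (x : E) (hx : x ∈ closedBall (0 : E) 1) : Δ φ x = 2⁻¹ * (Δ f x - Δ f (σ x)) := by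
    rw [laplacian_smul _ (hsub x hx), (hf x hx).laplacian_sub (hfσ x hx),
      laplacian_comp_linearIsometryEquiv, smul_eq_mul]
  have hDφ : fderiv ℝ φ 0 e = fderiv ℝ f 0 e := by
    have hD := fderiv_zero_sub_comp_reflection ((hf 0 h0).differentiableAt two_ne_zero) e
    rw [fderiv_const_smul ((hsub 0 h0).differentiableAt two_ne_zero), smul_apply, hD, smul_eq_mul,
      inv_mul_cancel_left₀ two_ne_zero]
  rw [← hDφ]
  refine fderiv_zero_le_of_eq_zero_on_hyperplane ((abs_nonneg _).trans (hfA 0 h0))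
    ((abs_nonneg _).trans (hfN 0 h0).le) he hφ (fun x hx => ?_) (fun x hx => ?_)
    (fun x _ hex => ?_)
  · have h₁ := abs_le.1 (hfA x hx)
    have h₂ := abs_le.1 (hfA _ (hσ x hx))
    change 2⁻¹ * (f x - f (σ x)) ≤ A
    linarith
  · have h₁ := abs_lt.1 (hfN x hx)
    have h₂ := abs_lt.1 (hfN _ (hσ x hx))
    rw [hΔφ x hx]
    linarith
  · have hσx : σ x = x := Submodule.reflection_mem_subspace_eq_self
      (Submodule.mem_orthogonal_singleton_iff_inner_right.2 hex)
    simp [φ, hσx]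

end HalfBall

section GradientEstimate

variable {E F : Type*} [NormedAddCommGroup E] [InnerProductSpace ℝ E] [FiniteDimensional ℝ E]
  [NormedAddCommGroup F] [NormedSpace ℝ F] {f : E → F} {x₀ : E} {r A N : ℝ}

theorem fderiv_zero_le_of_abs_laplacian_le {f : E → ℝ} {e : E} (he : ‖e‖ = 1)
    (hf : ∀ x ∈ closedBall (0 : E) 1, ContDiffAt ℝ 2 f x)
    (hA : ∀ x ∈ closedBall (0 : E) 1, |f x| ≤ A)
    (hN : ∀ x ∈ closedBall (0 : E) 1, |Δ f x| ≤ N) :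
    fderiv ℝ f 0 e ≤ finrank ℝ E * A + N / 2 :=
  le_of_forall_pos_le_add fun ε hε => by
    have := fderiv_zero_le_of_abs_laplacian_lt (N := N + 2 * ε) he hf hA
      fun x hx => (hN x hx).trans_lt (by linarith)
    linarith

theorem norm_fderiv_le_of_norm_laplacian_le (hr : 0 < r)
    (hf : ∀ x ∈ closedBall x₀ r, ContDiffAt ℝ 2 f x) (hA : ∀ x ∈ closedBall x₀ r, ‖f x‖ ≤ A)
    (hN : ∀ x ∈ closedBall x₀ r, ‖Δ f x‖ ≤ N) :
    ‖fderiv ℝ f x₀‖ ≤ finrank ℝ E * A / r + r * N / 2 := by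
  have h₀ : x₀ ∈ closedBall x₀ r := mem_closedBall_self hr.le
  have hA0 : 0 ≤ A := (norm_nonneg _).trans (hA x₀ h₀)
  have hN0 : 0 ≤ N := (norm_nonneg _).trans (hN x₀ h₀)
  refine ContinuousLinearMap.opNorm_le_of_unit_norm (by positivity) fun e he => ?_
  obtain ⟨ℓ, hℓ, hℓe⟩ := exists_dual_vector'' ℝ (fderiv ℝ f x₀ e)
  have hmem (z : E) (hz : z ∈ closedBall (0 : E) 1) : x₀ + r • z ∈ closedBall x₀ r := by
    have : ‖z‖ ≤ 1 := by simpa using hz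
    simpa [norm_smul, abs_of_pos hr] using mul_le_of_le_one_right hr.le this
  have hℓf (x : E) (hx : x ∈ closedBall x₀ r) : ContDiffAt ℝ 2 (ℓ ∘ f) x :=
    ℓ.contDiff.contDiffAt.comp x (hf x hx)
  have hD : fderiv ℝ (fun z => (ℓ ∘ f) (x₀ + r • z)) 0 e = r * ‖fderiv ℝ f x₀ e‖ := by
    have := congr($(fderiv_comp_smul (𝕜 := ℝ) (f := fun z => (ℓ ∘ f) (x₀ + z)) (x := 0) r) e)
    rw [this, fderiv_comp_add_left, smul_zero, add_zero,
      (ℓ.hasFDerivAt.comp x₀ ((hf x₀ h₀).differentiableAt two_ne_zero).hasFDerivAt).fderiv]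
    simpa using .inl hℓe
  have hle := fderiv_zero_le_of_abs_laplacian_le (f := fun z => (ℓ ∘ f) (x₀ + r • z)) (A := A)
    (N := r ^ 2 * N) he
    (fun z hz => ContDiffAt.comp (g := ℓ ∘ f) z (hℓf _ (hmem z hz)) (by fun_prop))
    (fun z hz => (ℓ.le_of_opNorm_le hℓ _).trans (by simpa using hA _ (hmem z hz)))
    (fun z hz => ?_)
  · rw [hD] at hle
    have : ‖fderiv ℝ f x₀ e‖ ≤ (finrank ℝ E * A + r ^ 2 * N / 2) / r :=
      (le_div_iff₀' hr).2 hle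
    refine this.trans_eq ?_
    field_simp
  · rw [laplacian_comp_add_smul _ _ hr.ne', (hf _ (hmem z hz)).laplacian_CLM_comp_left,
      smul_eq_mul, abs_mul, abs_of_nonneg (sq_nonneg r)]
    gcongr
    exact (ℓ.le_of_opNorm_le hℓ _).trans (by simpa using hN _ (hmem z hz))

end GradientEstimate

section InteriorSup

variable {E F : Type*} [NormedAddCommGroup E] [NormedAddCommGroup F] {g : E → F}
  {x₀ x : E} {ρ a : ℝ} {m : ℕ}

/-- The weighted interior norm `sup d^m ‖g‖` over `ball x₀ ρ`, where `d` is the distance to the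
bounding sphere; meaningful when the weighted function is bounded. -/
def interiorSup (x₀ : E) (ρ : ℝ) (m : ℕ) (g : E → F) : ℝ :=
  sSup ((fun x => (ρ - dist x x₀) ^ m * ‖g x‖) '' ball x₀ ρ)

theorem le_interiorSup [ProperSpace E] (hg : ContinuousOn g (closedBall x₀ ρ))
    (hx : x ∈ ball x₀ ρ) : (ρ - dist x x₀) ^ m * ‖g x‖ ≤ interiorSup x₀ ρ m g := by
  refine le_csSup (BddAbove.mono (image_mono ball_subset_closedBall)
    ((isCompact_closedBall x₀ ρ).image_of_continuousOn ?_).bddAbove) (mem_image_of_mem _ hx)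
  fun_prop

theorem interiorSup_le (hρ : 0 < ρ) (h : ∀ x ∈ ball x₀ ρ, (ρ - dist x x₀) ^ m * ‖g x‖ ≤ a) :
    interiorSup x₀ ρ m g ≤ a :=
  csSup_le ((nonempty_ball.2 hρ).image _) (forall_mem_image.2 h)

theorem interiorSup_nonneg : 0 ≤ interiorSup x₀ ρ m g := by
  refine Real.sSup_nonneg (forall_mem_image.2 fun x hx => ?_)
  have : 0 < ρ - dist x x₀ := sub_pos.2 hx
  positivity

theorem norm_le_interiorSup [ProperSpace E] (hρ : 0 < ρ) (hg : ContinuousOn g (closedBall x₀ ρ))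
    (hx : x ∈ closedBall x₀ (ρ / 2)) : ‖g x‖ ≤ (2 / ρ) ^ m * interiorSup x₀ ρ m g := by
  have hd : dist x x₀ ≤ ρ / 2 := hx
  have hle : (ρ / 2) ^ m * ‖g x‖ ≤ interiorSup x₀ ρ m g :=
    le_trans (by gcongr; linarith) (le_interiorSup hg (mem_ball.2 (by linarith)))
  rw [← inv_div ρ 2, inv_pow]
  exact (le_inv_mul_iff₀ (by positivity)).2 hle

end InteriorSup

section InteriorEstimates

variable {E F : Type*} [NormedAddCommGroup E] [InnerProductSpace ℝ E] [FiniteDimensional ℝ E]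
  [NormedAddCommGroup F] [NormedSpace ℝ F] {f : E → F} {x₀ : E} {ρ A N τ κ Λ : ℝ} {m : ℕ}

theorem interiorSup_fderiv_le (hρ : 0 < ρ) (hτ : 0 < τ) (hτ' : τ ≤ 1 / 2)
    (hf : ∀ x ∈ ball x₀ ρ, ContDiffAt ℝ 2 f x)
    (hA : ∀ x ∈ ball x₀ ρ, (ρ - dist x x₀) ^ m * ‖f x‖ ≤ A)
    (hN : ∀ x ∈ ball x₀ ρ, (ρ - dist x x₀) ^ (m + 2) * ‖Δ f x‖ ≤ N) :
    interiorSup x₀ ρ (m + 1) (fderiv ℝ f) ≤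
      2 ^ m * finrank ℝ E * A / τ + 2 ^ (m + 1) * τ * N := by
  refine interiorSup_le hρ fun x hx => ?_
  set d := ρ - dist x x₀
  have hd0 : 0 < d := sub_pos.2 hx
  have hdist (y : E) (hy : y ∈ closedBall x (τ * d)) : d / 2 ≤ ρ - dist y x₀ := by
    have h₁ : dist y x ≤ d / 2 := (mem_closedBall.1 hy).trans (by nlinarith)
    linarith [dist_triangle y x x₀]
  have hball (y : E) (hy : y ∈ closedBall x (τ * d)) : y ∈ ball x₀ ρ :=
    mem_ball.2 (by linarith [hdist y hy])
  have hweight (j : ℕ) {c B : ℝ} {y : E} (hc : 0 ≤ c) (hy : y ∈ closedBall x (τ * d))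
      (h : (ρ - dist y x₀) ^ j * c ≤ B) : c ≤ 2 ^ j * B / d ^ j := by
    have h₁ : (d / 2) ^ j * c ≤ B := le_trans (by gcongr; exact hdist y hy) h
    rw [le_div_iff₀ (by positivity)]
    calc c * d ^ j = 2 ^ j * ((d / 2) ^ j * c) := by rw [div_pow]; field_simp
      _ ≤ 2 ^ j * B := by gcongr
  have hgrad := norm_fderiv_le_of_norm_laplacian_le (mul_pos hτ hd0)
    (fun y hy => hf y (hball y hy))
    (fun y hy => hweight m (norm_nonneg _) hy (hA y (hball y hy)))
    (fun y hy => hweight (m + 2) (norm_nonneg _) hy (hN y (hball y hy)))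
  calc d ^ (m + 1) * ‖fderiv ℝ f x‖
      ≤ d ^ (m + 1) * (finrank ℝ E * (2 ^ m * A / d ^ m) / (τ * d) +
          τ * d * (2 ^ (m + 2) * N / d ^ (m + 2)) / 2) := by gcongr
    _ = 2 ^ m * finrank ℝ E * A / τ + 2 ^ (m + 1) * τ * N := by field_simp; ring

theorem le_of_forall_interpolation {a b c L : ℝ} (ha : 0 ≤ a) (hL : 0 ≤ L) (hb : 0 ≤ b)
    (h : ∀ τ : ℝ, 0 < τ → τ ≤ 1 / 2 → a ≤ c / τ + 2 * τ * (L * (b + a))) :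
    a ≤ 4 * c * (1 + 2 * L) + b := by
  have hle : 1 / (2 * (1 + 2 * L)) ≤ 1 / 2 := one_div_le_one_div_of_le two_pos (by linarith)
  have habsorb : 2 * (1 / (2 * (1 + 2 * L))) * L ≤ 1 / 2 := by
    rw [mul_one_div, div_mul_eq_mul_div, div_le_div_iff₀ (by positivity) two_pos]
    linarith
  have h₁ := h _ (by positivity) hle
  have h₂ := mul_le_mul_of_nonneg_right habsorb (add_nonneg hb ha)
  have : c / (1 / (2 * (1 + 2 * L))) = 2 * c * (1 + 2 * L) := by field_simp
  linarith

theorem norm_fderiv_le_of_norm_laplacian_le_add (hρ : 0 < ρ) (hΛ : 0 ≤ Λ)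
    (hf : ∀ x ∈ closedBall x₀ ρ, ContDiffAt ℝ 2 f x) (hκ : ∀ x ∈ closedBall x₀ ρ, ‖f x‖ ≤ κ)
    (hΔ : ∀ x ∈ ball x₀ ρ, ‖Δ f x‖ ≤ Λ * (κ + ‖fderiv ℝ f x‖)) :
    ∀ x ∈ closedBall x₀ (ρ / 2),
      ‖fderiv ℝ f x‖ ≤ (8 * finrank ℝ E * (1 + 2 * Λ * ρ) / ρ + 2) * κ := by
  have hκ0 : 0 ≤ κ := (norm_nonneg _).trans (hκ x₀ (mem_closedBall_self hρ.le))
  have hDf : ContinuousOn (fderiv ℝ f) (closedBall x₀ ρ) := fun x hx =>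
    ((hf x hx).continuousAt_fderiv two_ne_zero).continuousWithinAt
  set a := interiorSup x₀ ρ 1 (fderiv ℝ f)
  have ha0 : 0 ≤ a := interiorSup_nonneg
  have hinterp (τ : ℝ) (hτ : 0 < τ) (hτ' : τ ≤ 1 / 2) :
      a ≤ finrank ℝ E * κ / τ + 2 * τ * (Λ * ρ * (ρ * κ + a)) := by
    have := interiorSup_fderiv_le (m := 0) (A := κ) (N := Λ * ρ * (ρ * κ + a)) hρ hτ hτ'
      (fun x hx => hf x (ball_subset_closedBall hx))
      (fun x hx => by simpa using hκ x (ball_subset_closedBall hx)) (fun x hx => ?_)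
    · simpa using this
    · have hd : 0 < ρ - dist x x₀ := sub_pos.2 hx
      have hdρ : ρ - dist x x₀ ≤ ρ := by linarith [dist_nonneg (x := x) (y := x₀)]
      have hDfx : (ρ - dist x x₀) ^ 1 * ‖fderiv ℝ f x‖ ≤ a := le_interiorSup hDf hx
      calc (ρ - dist x x₀) ^ (0 + 2) * ‖Δ f x‖
          ≤ (ρ - dist x x₀) ^ 2 * (Λ * (κ + ‖fderiv ℝ f x‖)) := by gcongr; exact hΔ x hx
        _ = Λ * (ρ - dist x x₀) * ((ρ - dist x x₀) * κ + (ρ - dist x x₀) ^ 1 * ‖fderiv ℝ f x‖) := by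
          ring
        _ ≤ Λ * ρ * (ρ * κ + a) := by gcongr
  have ha := le_of_forall_interpolation ha0 (mul_nonneg hΛ hρ.le) (mul_nonneg hρ.le hκ0) hinterp
  intro x hx
  calc ‖fderiv ℝ f x‖ ≤ (2 / ρ) ^ 1 * a := norm_le_interiorSup hρ hDf hx
    _ ≤ (2 / ρ) ^ 1 * (4 * (finrank ℝ E * κ) * (1 + 2 * (Λ * ρ)) + ρ * κ) := by gcongr
    _ = (8 * finrank ℝ E * (1 + 2 * Λ * ρ) / ρ + 2) * κ := by field_simp; ring

end InteriorEstimates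

section Prolongation

variable {E F : Type*} [NormedAddCommGroup E] [NormedSpace ℝ E]
  [NormedAddCommGroup F] [NormedSpace ℝ F]

/-- If `Δ f = N (f, Df)`, then the pair `V = (f, Df)` solves `Δ V = prolongation N (V, DV)`. -/
def prolongation (N : F × (E →L[ℝ] F) → F)
    (q : (F × (E →L[ℝ] F)) × (E →L[ℝ] F × (E →L[ℝ] F))) : F × (E →L[ℝ] F) :=
  (N q.1, (fderiv ℝ N q.1).comp q.2)

theorem contDiff_prolongation {N : F × (E →L[ℝ] F) → F} (hN : ContDiff ℝ ∞ N) :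
    ContDiff ℝ ∞ (prolongation N) :=
  (hN.comp contDiff_fst).prodMk
    (((hN.fderiv_right (by norm_cast)).comp contDiff_fst).clm_comp contDiff_snd)

theorem norm_prolongation_le {N : F × (E →L[ℝ] F) → F} {Λ κ : ℝ}
    {q : (F × (E →L[ℝ] F)) × (E →L[ℝ] F × (E →L[ℝ] F))} (hN : ‖N q.1‖ ≤ Λ * κ)
    (hDN : ‖fderiv ℝ N q.1‖ ≤ Λ) : ‖prolongation N q‖ ≤ Λ * (κ + ‖q.2‖) := by
  rw [prolongation, mul_add]
  exact (max_le_add_of_nonneg (norm_nonneg _) (norm_nonneg _)).trans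
    (add_le_add hN ((ContinuousLinearMap.opNorm_comp_le _ _).trans (by gcongr)))

theorem exists_lipschitz_bound_of_map_zero [FiniteDimensional ℝ F] {G : Type*}
    [NormedAddCommGroup G] [NormedSpace ℝ G] {N : F → G} (hN : ContDiff ℝ 1 N) (h0 : N 0 = 0)
    (M : ℝ) : ∃ Λ, 0 ≤ Λ ∧ ∀ v, ‖v‖ ≤ M → ‖fderiv ℝ N v‖ ≤ Λ ∧ ‖N v‖ ≤ Λ * ‖v‖ := by
  obtain ⟨Λ, hΛ⟩ := (isCompact_closedBall (0 : F) M).exists_bound_of_continuousOn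
    (hN.continuous_fderiv one_ne_zero).continuousOn
  have hbound (v : F) (hv : ‖v‖ ≤ M) : ‖fderiv ℝ N v‖ ≤ max Λ 0 :=
    (hΛ v (by simpa using hv)).trans (le_max_left _ _)
  refine ⟨max Λ 0, le_max_right _ _, fun v hv => ⟨hbound v hv, ?_⟩⟩
  have := (convex_closedBall (0 : F) M).norm_image_sub_le_of_norm_fderiv_le (𝕜 := ℝ)
    (fun w _ => hN.differentiable one_ne_zero w) (fun w hw => hbound w (by simpa using hw))
    (x := 0) (y := v) (by simpa using (norm_nonneg v).trans hv) (by simpa using hv)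
  simpa [h0] using this

theorem norm_iteratedFDeriv_succ_le_prodMk {f : E → F} {x : E} (hf : ContDiffAt ℝ ∞ f x) (k : ℕ) :
    ‖iteratedFDeriv ℝ (k + 1) f x‖ ≤ ‖iteratedFDeriv ℝ k (fun y => (f y, fderiv ℝ f y)) x‖ := by
  rw [← norm_iteratedFDeriv_fderiv]
  exact norm_iteratedFDeriv_le_prodMk (hf.of_le (by norm_cast; exact le_top))
    (hf.fderiv_right (by norm_cast; exact le_top))

end Prolongation

section HigherDerivatives

universe u

variable {E : Type u} [NormedAddCommGroup E] [InnerProductSpace ℝ E] [FiniteDimensional ℝ E]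

theorem laplacian_prodMk_fderiv {F : Type*} [NormedAddCommGroup F] [NormedSpace ℝ F] {x : E}
    {N : F × (E →L[ℝ] F) → F} (hN : ContDiff ℝ ∞ N) {f : E → F}
    (hf : ContDiffAt ℝ ∞ f x) (hΔ : Δ f =ᶠ[𝓝 x] fun y => N (f y, fderiv ℝ f y)) :
    Δ (fun y => (f y, fderiv ℝ f y)) x =
      prolongation N ((f x, fderiv ℝ f x), fderiv ℝ (fun y => (f y, fderiv ℝ f y)) x) := by
  have hDf : ContDiffAt ℝ ∞ (fderiv ℝ f) x := hf.fderiv_right (by norm_cast)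
  have hV : DifferentiableAt ℝ (fun y => (f y, fderiv ℝ f y)) x :=
    (hf.prodMk hDf).differentiableAt (by simp)
  rw [laplacian_prodMk (hf.of_le (by norm_cast)) (hDf.of_le (by norm_cast)),
    laplacian_fderiv (hf.of_le (by norm_cast)), hΔ.fderiv_eq, hΔ.eq_of_nhds]
  exact congrArg (Prod.mk _) (fderiv_comp x (hN.differentiable (by simp) _) hV)

theorem exists_norm_iteratedFDeriv_le_of_laplacian_eq (k : ℕ) :
    ∀ {F : Type u} [NormedAddCommGroup F] [NormedSpace ℝ F] [FiniteDimensional ℝ F]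
      {N : F × (E →L[ℝ] F) → F} (_ : ContDiff ℝ ∞ N) (_ : N 0 = 0) {ρ : ℝ} (_ : 0 < ρ) (M : ℝ),
    ∃ C, ∀ (x₀ : E) (κ : ℝ) (f : E → F), κ ≤ M →
      (∀ x ∈ closedBall x₀ ρ, ContDiffAt ℝ ∞ f x) →
      (∀ x ∈ closedBall x₀ ρ, Δ f x = N (f x, fderiv ℝ f x)) →
      (∀ x ∈ closedBall x₀ ρ, ‖(f x, fderiv ℝ f x)‖ ≤ κ) →
      ‖iteratedFDeriv ℝ k f x₀‖ ≤ C * κ := by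
  induction k with
  | zero =>
    intro F _ _ _ N _ _ ρ hρ M
    refine ⟨1, fun x₀ κ f _ _ _ hκ => ?_⟩
    simpa using (norm_fst_le _).trans (hκ x₀ (mem_closedBall_self hρ.le))
  | succ k ih =>
    intro F _ _ _ N hN hN0 ρ hρ M
    obtain ⟨Λ, hΛ, hNΛ⟩ := exists_lipschitz_bound_of_map_zero (hN.of_le (by norm_cast)) hN0 M
    set D : ℝ := max 1 (8 * finrank ℝ E * (1 + 2 * Λ * ρ) / ρ + 2)
    obtain ⟨C, hC⟩ := ih (contDiff_prolongation hN) (by simp [prolongation, hN0])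
      (half_pos hρ) (D * M)
    refine ⟨C * D, fun x₀ κ f hκM hf hΔ hκ => ?_⟩
    have hκ0 : 0 ≤ κ := (norm_nonneg _).trans (hκ x₀ (mem_closedBall_self hρ.le))
    set V : E → F × (E →L[ℝ] F) := fun y => (f y, fderiv ℝ f y)
    have hV (x : E) (hx : x ∈ closedBall x₀ ρ) : ContDiffAt ℝ ∞ V x :=
      (hf x hx).prodMk ((hf x hx).fderiv_right (by norm_cast))
    have hΔV : ∀ x ∈ ball x₀ ρ, Δ V x = prolongation N (V x, fderiv ℝ V x) := fun x hx =>
      laplacian_prodMk_fderiv hN (hf x (ball_subset_closedBall hx))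
        (eventually_of_mem (isOpen_ball.mem_nhds hx) fun y hy => hΔ y (ball_subset_closedBall hy))
    have hV_le (x : E) (hx : x ∈ closedBall x₀ ρ) : ‖V x‖ ≤ κ := hκ x hx
    have hΔV_le (x : E) (hx : x ∈ ball x₀ ρ) : ‖Δ V x‖ ≤ Λ * (κ + ‖fderiv ℝ V x‖) := by
      have hVx := hV_le x (ball_subset_closedBall hx)
      obtain ⟨hDN, hN⟩ := hNΛ (V x) (hVx.trans hκM)
      rw [hΔV x hx]
      exact norm_prolongation_le (hN.trans (by gcongr)) hDN
    have hDV := norm_fderiv_le_of_norm_laplacian_le_add hρ hΛ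
      (fun x hx => (hV x hx).of_le (by norm_cast)) hV_le hΔV_le
    have hsub : closedBall x₀ (ρ / 2) ⊆ ball x₀ ρ := closedBall_subset_ball (half_lt_self hρ)
    calc ‖iteratedFDeriv ℝ (k + 1) f x₀‖ ≤ ‖iteratedFDeriv ℝ k V x₀‖ :=
          norm_iteratedFDeriv_succ_le_prodMk (hf x₀ (mem_closedBall_self hρ.le)) k
      _ ≤ C * (D * κ) := hC x₀ (D * κ) V (by gcongr)
          (fun x hx => hV x (ball_subset_closedBall (hsub hx))) (fun x hx => hΔV x (hsub hx))
          fun x hx => max_le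
            ((hV_le x (ball_subset_closedBall (hsub hx))).trans
              (le_mul_of_one_le_left hκ0 (le_max_left _ _)))
            ((hDV x hx).trans (by gcongr; exact le_max_right _ _))
      _ = C * D * κ := by ring

end HigherDerivatives

section Vorticity

variable {E : Type*} [NormedAddCommGroup E] [InnerProductSpace ℝ E] [FiniteDimensional ℝ E]
  {v : E → E} {p : E → ℝ} {x : E}

variable (E) in
/-- The trace of endomorphisms as a continuous linear form. The divergence of `v` at `x` is
`endTrace E (fderiv ℝ v x)`. -/
def endTrace : (E →L[ℝ] E) →L[ℝ] ℝ :=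
  LinearMap.toContinuousLinearMap (LinearMap.trace ℝ E ∘ₗ ContinuousLinearMap.coeLM ℝ)

theorem endTrace_eq_sum_inner {ι : Type*} [Fintype ι] (b : OrthonormalBasis ι ℝ E)
    (T : E →L[ℝ] E) : endTrace E T = ∑ i, ⟪b i, T (b i)⟫ :=
  LinearMap.trace_eq_sum_inner _ b

variable (E) in
/-- Twice the projection onto skew-adjoint endomorphisms. -/
def subAdjoint : (E →L[ℝ] E) →L[ℝ] (E →L[ℝ] E) :=
  .id ℝ _ - (starL' ℝ : (E →L[ℝ] E) ≃L[ℝ] (E →L[ℝ] E))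

theorem subAdjoint_apply (T : E →L[ℝ] E) : subAdjoint E T = T - star T := rfl

theorem norm_subAdjoint_le (T : E →L[ℝ] E) : ‖subAdjoint E T‖ ≤ 2 * ‖T‖ := by
  rw [subAdjoint_apply, two_mul]
  exact (norm_sub_le _ _).trans_eq
    (congrArg _ (ContinuousLinearMap.adjoint.norm_map T))

/-- The vorticity of a vector field in any dimension, as a skew-adjoint endomorphism. -/
def vorticity (v : E → E) (x : E) : E →L[ℝ] E := subAdjoint E (fderiv ℝ v x)

theorem fderiv_vorticity (hv : ContDiffAt ℝ 2 v x) (w : E) :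
    fderiv ℝ (vorticity v) x w = subAdjoint E (fderiv ℝ (fderiv ℝ v) x w) :=
  congr($(((subAdjoint E).hasFDerivAt.comp x (hasFDerivAt_fderiv hv)).fderiv) w)

theorem endTrace_fderiv_fderiv (hv : ContDiffAt ℝ 2 v x)
    (hdiv : ∀ᶠ y in 𝓝 x, endTrace E (fderiv ℝ v y) = 0) (w : E) :
    endTrace E (fderiv ℝ (fderiv ℝ v) x w) = 0 := by
  have h := (endTrace E).hasFDerivAt.comp x (hasFDerivAt_fderiv hv)
  exact congr($(h.unique ((hasFDerivAt_const 0 x).congr_of_eventuallyEq hdiv)) w)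

theorem laplacian_eq_sum_fderiv_vorticity {ι : Type*} [Fintype ι] (b : OrthonormalBasis ι ℝ E)
    (hv : ContDiffAt ℝ 2 v x) (hdiv : ∀ᶠ y in 𝓝 x, endTrace E (fderiv ℝ v y) = 0) :
    Δ v x = ∑ i, fderiv ℝ (vorticity v) x (b i) (b i) := by
  have hsymm (w z : E) : fderiv ℝ (fderiv ℝ v) x w z = fderiv ℝ (fderiv ℝ v) x z w :=
    hv.isSymmSndFDerivAt (by simp) w z
  have hadj : ∑ i, star (fderiv ℝ (fderiv ℝ v) x (b i)) (b i) = 0 := by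
    refine ext_inner_right ℝ fun w => ?_
    simp only [sum_inner, ContinuousLinearMap.star_eq_adjoint,
      ContinuousLinearMap.adjoint_inner_left, hsymm _ w, inner_zero_left,
      ← endTrace_eq_sum_inner b, endTrace_fderiv_fderiv hv hdiv]
  simp only [laplacian_eq_sum_fderiv_fderiv b, fderiv_vorticity hv, subAdjoint_apply,
    sub_apply, Finset.sum_sub_distrib, hadj, sub_zero]

theorem norm_laplacian_le_norm_fderiv_vorticity (hv : ContDiffAt ℝ 2 v x)
    (hdiv : ∀ᶠ y in 𝓝 x, endTrace E (fderiv ℝ v y) = 0) :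
    ‖Δ v x‖ ≤ finrank ℝ E * ‖fderiv ℝ (vorticity v) x‖ := by
  set b := stdOrthonormalBasis ℝ E
  rw [laplacian_eq_sum_fderiv_vorticity b hv hdiv]
  refine (norm_sum_le_of_le _ fun i _ =>
    (fderiv ℝ (vorticity v) x).le_opNorm₂ (b i) (b i)).trans_eq ?_
  simp [b.norm_eq_one]

variable (E) in
/-- The Riesz isomorphism `toDual.symm`, as a linear rather than conjugate-linear map. -/
def sharp : StrongDual ℝ E →L[ℝ] E :=
  (toDual ℝ E).symm.toContinuousLinearEquiv.toContinuousLinearMap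

theorem hasFDerivAt_gradient (hp : ContDiffAt ℝ 2 p x) :
    HasFDerivAt (∇ p) (fderiv ℝ (∇ p) x) x :=
  ((sharp E).hasFDerivAt.comp x (hasFDerivAt_fderiv hp)).differentiableAt.hasFDerivAt

theorem inner_fderiv_gradient (hp : ContDiffAt ℝ 2 p x) (w z : E) :
    ⟪fderiv ℝ (∇ p) x w, z⟫ = fderiv ℝ (fderiv ℝ p) x w z := by
  have h : HasFDerivAt (∇ p) (sharp E ∘L fderiv ℝ (fderiv ℝ p) x) x :=
    (sharp E).hasFDerivAt.comp x (hasFDerivAt_fderiv hp)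
  rw [h.fderiv]
  exact toDual_symm_apply

theorem subAdjoint_fderiv_gradient (hp : ContDiffAt ℝ 2 p x) :
    subAdjoint E (fderiv ℝ (∇ p) x) = 0 := by
  refine ContinuousLinearMap.ext fun w => ext_inner_right ℝ fun z => ?_
  rw [subAdjoint_apply, sub_apply, inner_sub_left, ContinuousLinearMap.star_eq_adjoint,
    ContinuousLinearMap.adjoint_inner_left, real_inner_comm _ w, inner_fderiv_gradient hp,
    inner_fderiv_gradient hp, hp.isSymmSndFDerivAt (by simp) w z, sub_self, zero_apply,
    inner_zero_left]

theorem endTrace_fderiv_gradient (hp : ContDiffAt ℝ 2 p x) :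
    endTrace E (fderiv ℝ (∇ p) x) = Δ p x := by
  set b := stdOrthonormalBasis ℝ E
  rw [endTrace_eq_sum_inner b, laplacian_eq_sum_fderiv_fderiv b]
  exact Finset.sum_congr rfl fun i _ => by rw [real_inner_comm, inner_fderiv_gradient hp]

end Vorticity

section SteadyNavierStokes

variable {E : Type*} [NormedAddCommGroup E] [InnerProductSpace ℝ E] [FiniteDimensional ℝ E]

/-- A smooth solution of the steady Navier–Stokes system `-Δ v + (v · ∇) v + ∇ p = 0`,
`div v = 0` on the open set `Ω`, in any finite dimension. -/
structure IsSteadyNavierStokes (Ω : Set E) (v : E → E) (p : E → ℝ) : Prop where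
  isOpen : IsOpen Ω
  contDiffAt_velocity : ∀ x ∈ Ω, ContDiffAt ℝ ∞ v x
  contDiffAt_pressure : ∀ x ∈ Ω, ContDiffAt ℝ ∞ p x
  laplacian_velocity : ∀ x ∈ Ω, Δ v x = fderiv ℝ v x (v x) + ∇ p x
  endTrace_fderiv : ∀ x ∈ Ω, endTrace E (fderiv ℝ v x) = 0

namespace IsSteadyNavierStokes

variable {Ω : Set E} {v : E → E} {p : E → ℝ} {x : E}

theorem eventually_endTrace_fderiv (h : IsSteadyNavierStokes Ω v p) (hx : x ∈ Ω) :
    ∀ᶠ y in 𝓝 x, endTrace E (fderiv ℝ v y) = 0 :=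
  eventually_of_mem (h.isOpen.mem_nhds hx) h.endTrace_fderiv

theorem laplacian_fderiv_velocity (h : IsSteadyNavierStokes Ω v p) (hx : x ∈ Ω) :
    Δ (fderiv ℝ v) x =
      fderiv ℝ (fderiv ℝ v) x (v x) + fderiv ℝ v x ∘L fderiv ℝ v x + fderiv ℝ (∇ p) x := by
  have hv := h.contDiffAt_velocity x hx
  have hmomentum : Δ v =ᶠ[𝓝 x] fun y => fderiv ℝ v y (v y) + ∇ p y :=
    eventually_of_mem (h.isOpen.mem_nhds hx) h.laplacian_velocity
  have hconvection : HasFDerivAt (fun y => fderiv ℝ v y (v y))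
      (fderiv ℝ v x ∘L fderiv ℝ v x + (fderiv ℝ (fderiv ℝ v) x).flip (v x)) x :=
    (hasFDerivAt_fderiv (hv.of_le (by norm_cast))).clm_apply
      (hv.differentiableAt (by simp)).hasFDerivAt
  have hflip : (fderiv ℝ (fderiv ℝ v) x).flip (v x) = fderiv ℝ (fderiv ℝ v) x (v x) :=
    ContinuousLinearMap.ext fun w =>
      (hv.of_le (by norm_cast : 2 ≤ ∞)).isSymmSndFDerivAt (by simp) w (v x)
  rw [laplacian_fderiv (hv.of_le (by norm_cast)), hmomentum.fderiv_eq,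
    (hconvection.fun_add (hasFDerivAt_gradient ((h.contDiffAt_pressure x hx).of_le (by norm_cast)))
      ).fderiv, hflip, add_comm (_ ∘L _)]

theorem laplacian_vorticity (h : IsSteadyNavierStokes Ω v p) (hx : x ∈ Ω) :
    Δ (vorticity v) x =
      fderiv ℝ (vorticity v) x (v x) + subAdjoint E (fderiv ℝ v x ∘L fderiv ℝ v x) := by
  have hv := h.contDiffAt_velocity x hx
  have hDv : ContDiffAt ℝ 2 (fderiv ℝ v) x := hv.fderiv_right (by norm_cast)
  have hΔ : Δ (vorticity v) x = subAdjoint E (Δ (fderiv ℝ v) x) :=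
    hDv.laplacian_CLM_comp_left
  rw [hΔ, h.laplacian_fderiv_velocity hx, map_add, map_add,
    subAdjoint_fderiv_gradient ((h.contDiffAt_pressure x hx).of_le (by norm_cast)), add_zero,
    fderiv_vorticity (hv.of_le (by norm_cast))]

theorem laplacian_pressure (h : IsSteadyNavierStokes Ω v p) (hx : x ∈ Ω) :
    Δ p x = -endTrace E (fderiv ℝ v x ∘L fderiv ℝ v x) := by
  have hv := h.contDiffAt_velocity x hx
  have hdiv := h.eventually_endTrace_fderiv hx
  have hΔdiv : endTrace E (Δ (fderiv ℝ v) x) = 0 := by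
    have hDv : ContDiffAt ℝ 2 (fderiv ℝ v) x := hv.fderiv_right (by norm_cast)
    have hzero : endTrace E ∘ fderiv ℝ v =ᶠ[𝓝 x] fun _ => (0 : ℝ) := hdiv
    rw [← Function.comp_apply (f := endTrace E), ← hDv.laplacian_CLM_comp_left,
      (laplacian_congr_nhds hzero).eq_of_nhds, laplacian_const]
    rfl
  rw [h.laplacian_fderiv_velocity hx, map_add, map_add,
    endTrace_fderiv_fderiv (hv.of_le (by norm_cast)) hdiv, zero_add,
    endTrace_fderiv_gradient ((h.contDiffAt_pressure x hx).of_le (by norm_cast))] at hΔdiv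
  linarith

theorem norm_laplacian_velocity_le (h : IsSteadyNavierStokes Ω v p) (hx : x ∈ Ω) :
    ‖Δ v x‖ ≤ finrank ℝ E * ‖fderiv ℝ (vorticity v) x‖ :=
  norm_laplacian_le_norm_fderiv_vorticity ((h.contDiffAt_velocity x hx).of_le (by norm_cast))
    (h.eventually_endTrace_fderiv hx)

theorem norm_laplacian_vorticity_le (h : IsSteadyNavierStokes Ω v p) (hx : x ∈ Ω) :
    ‖Δ (vorticity v) x‖ ≤ ‖fderiv ℝ (vorticity v) x‖ * ‖v x‖ + 2 * ‖fderiv ℝ v x‖ ^ 2 := by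
  rw [h.laplacian_vorticity hx]
  refine (norm_add_le _ _).trans (add_le_add (ContinuousLinearMap.le_opNorm _ _) ?_)
  refine (norm_subAdjoint_le _).trans ?_
  rw [sq]
  gcongr
  exact ContinuousLinearMap.opNorm_comp_le _ _

theorem norm_fderiv_pressure_le (h : IsSteadyNavierStokes Ω v p) (hx : x ∈ Ω) :
    ‖fderiv ℝ p x‖ ≤
      finrank ℝ E * ‖fderiv ℝ (vorticity v) x‖ + ‖fderiv ℝ v x‖ * ‖v x‖ := by
  have hgrad : ∇ p x = Δ v x - fderiv ℝ v x (v x) :=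
    eq_sub_of_add_eq' (h.laplacian_velocity x hx).symm
  rw [← (toDual ℝ E).symm.norm_map]
  change ‖∇ p x‖ ≤ _
  rw [hgrad]
  exact (norm_sub_le _ _).trans
    (add_le_add (h.norm_laplacian_velocity_le hx) (ContinuousLinearMap.le_opNorm _ _))

theorem comp_add_smul (h : IsSteadyNavierStokes Ω v p) (x₀ : E) {r : ℝ} (hr : r ≠ 0) :
    IsSteadyNavierStokes ((fun z => x₀ + r • z) ⁻¹' Ω) (fun z => r • v (x₀ + r • z))
      (fun z => r ^ 2 * p (x₀ + r • z)) := by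
  have hv (z : E) (hz : x₀ + r • z ∈ Ω) : ContDiffAt ℝ ∞ (fun z => v (x₀ + r • z)) z :=
    contDiffAt_comp_add_smul (h.contDiffAt_velocity _ hz)
  have hp (z : E) (hz : x₀ + r • z ∈ Ω) : ContDiffAt ℝ ∞ (fun z => p (x₀ + r • z)) z :=
    contDiffAt_comp_add_smul (h.contDiffAt_pressure _ hz)
  have hDv (z : E) (hz : x₀ + r • z ∈ Ω) :
      fderiv ℝ (fun z => r • v (x₀ + r • z)) z = r ^ 2 • fderiv ℝ v (x₀ + r • z) := by
    rw [fderiv_fun_const_smul ((hv z hz).differentiableAt (by simp)), fderiv_comp_add_smul,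
      smul_smul, sq]
  have hΔv (z : E) (hz : x₀ + r • z ∈ Ω) :
      Δ (fun z => r • v (x₀ + r • z)) z = r ^ 3 • Δ v (x₀ + r • z) := by
    refine (laplacian_smul r ((hv z hz).of_le (by norm_cast))).trans ?_
    rw [laplacian_comp_add_smul v x₀ hr, smul_smul, ← pow_succ']
  have hDp (z : E) (hz : x₀ + r • z ∈ Ω) :
      ∇ (fun z => r ^ 2 * p (x₀ + r • z)) z = r ^ 3 • ∇ p (x₀ + r • z) := by
    rw [gradient, fderiv_const_mul ((hp z hz).differentiableAt (by simp)), fderiv_comp_add_smul,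
      smul_smul, ← pow_succ, map_smulₛₗ]
    rfl
  refine ⟨h.isOpen.preimage (by fun_prop), fun z hz => (hv z hz).const_smul r,
    fun z hz => contDiffAt_const.mul (hp z hz), fun z hz => ?_, fun z hz => ?_⟩
  · rw [hΔv z hz, hDp z hz, hDv z hz, h.laplacian_velocity _ hz, smul_add, map_smul, smul_apply,
      smul_smul, ← pow_succ']
  · rw [hDv z hz, map_smul, h.endTrace_fderiv _ hz, smul_zero]

end IsSteadyNavierStokes

end SteadyNavierStokes

section CoupledInterpolation

variable {n K a b : ℝ}

theorem sq_le_of_forall_interpolation (hn : 0 ≤ n) (ha : 0 ≤ a) (hb : 0 ≤ b) (hK : 0 ≤ K)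
    (h : ∀ τ : ℝ, 0 < τ → τ ≤ 1 / 2 → a ≤ n * K / τ + 2 * τ * (n * b)) :
    a ^ 2 ≤ 4 * n * K * (a + 2 * n * b) := by
  obtain rfl | ha := ha.eq_or_lt
  · rw [zero_pow two_ne_zero]
    positivity
  have : 0 < a + 2 * n * b := by positivity
  have h₁ := h (a / (2 * (a + 2 * n * b))) (by positivity) (by
    rw [div_le_div_iff₀ (by positivity) two_pos]
    nlinarith [mul_nonneg hn hb])
  have h₂ : 2 * (a / (2 * (a + 2 * n * b))) * (n * b) ≤ a / 2 := by
    rw [mul_div_assoc', div_mul_eq_mul_div, div_le_div_iff₀ (by positivity) two_pos]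
    nlinarith
  have h₃ : a ≤ 4 * n * K * (a + 2 * n * b) / a := by
    have : n * K / (a / (2 * (a + 2 * n * b))) = 2 * n * K * (a + 2 * n * b) / a := by field_simp
    have : 4 * n * K * (a + 2 * n * b) / a = 2 * (2 * n * K * (a + 2 * n * b) / a) := by ring
    linarith
  rw [le_div_iff₀ ha] at h₃
  linarith

-- The first inequality, optimised in `τ`, makes `a ^ 2` at most linear in `a` and `b` with the
-- small factor `K`; hence the quadratic term of the second is absorbed for a suitable fixed `τ`.
theorem exists_le_mul_of_forall_interpolation (hn : 0 ≤ n) (M : ℝ) :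
    ∃ C, 0 ≤ C ∧ ∀ K a b : ℝ, 0 ≤ K → K ≤ M → 0 ≤ a → 0 ≤ b →
      (∀ τ : ℝ, 0 < τ → τ ≤ 1 / 2 → a ≤ n * K / τ + 2 * τ * (n * b)) →
      (∀ τ : ℝ, 0 < τ → τ ≤ 1 / 2 → b ≤ 4 * n * a / τ + 4 * τ * (b * K + 2 * a ^ 2)) →
      a ≤ C * K ∧ b ≤ C * K := by
  set θ : ℝ := 1 / (2 * (1 + (4 + 64 * n ^ 2) * |M|)) with hθ
  have hθ0 : 0 < θ := by positivity
  have hθ1 : θ ≤ 1 / 2 :=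
    one_div_le_one_div_of_le two_pos (by nlinarith [abs_nonneg M, sq_nonneg n])
  set D : ℝ := 16 * n / θ
  set C : ℝ := 4 * n * (1 + 2 * n * D)
  refine ⟨C + D * C, by positivity, fun K a b hK hKM ha hb h₁ h₂ => ?_⟩
  have hsq := sq_le_of_forall_interpolation hn ha hb hK h₁
  have hθK : θ * K * (4 + 64 * n ^ 2) ≤ 1 / 2 := by
    rw [hθ, one_div_mul_eq_div, div_mul_eq_mul_div, div_le_div_iff₀ (by positivity) two_pos]
    nlinarith [mul_le_mul_of_nonneg_right (hKM.trans (le_abs_self M))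
      (by positivity : 0 ≤ 4 + 64 * n ^ 2)]
  have hb : b ≤ D * a := by
    have hquad : 8 * θ * a ^ 2 ≤ 8 * θ * (4 * n * K * (a + 2 * n * b)) := by gcongr
    have hlin : 32 * n * (θ * K) * a ≤ 32 * n * (1 / 8) * a := by
      gcongr
      nlinarith [mul_nonneg (mul_nonneg hθ0.le hK) (sq_nonneg n)]
    have hdiv : 4 * n * a ≤ 4 * n * a / θ := le_div_self (by positivity) hθ0 (by linarith)
    have habsorb := mul_le_mul_of_nonneg_right hθK hb
    have hD : D * a = 4 * (4 * n * a / θ) := by ring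
    linarith [h₂ θ hθ0 hθ1]
  have ha : a ≤ C * K := by
    obtain rfl | ha := ha.eq_or_lt
    · positivity
    refine le_of_mul_le_mul_right ?_ ha
    calc a * a = a ^ 2 := (sq a).symm
      _ ≤ 4 * n * K * (a + 2 * n * (D * a)) := hsq.trans (by gcongr)
      _ = C * K * a := by simp only [C]; ring
  have hDC : b ≤ D * (C * K) := hb.trans (by gcongr)
  constructor <;> nlinarith [show 0 ≤ C * K by positivity, show 0 ≤ D * (C * K) by positivity]

end CoupledInterpolation

section VelocityGradient

variable {E : Type*} [NormedAddCommGroup E] [InnerProductSpace ℝ E] [FiniteDimensional ℝ E]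
  {Ω : Set E} {v : E → E} {p : E → ℝ} {x x₀ : E} {K : ℝ}

namespace IsSteadyNavierStokes

theorem continuousOn_fderiv_velocity (h : IsSteadyNavierStokes Ω v p) :
    ContinuousOn (fderiv ℝ v) Ω := fun x hx =>
  ((h.contDiffAt_velocity x hx).continuousAt_fderiv (by simp)).continuousWithinAt

theorem contDiffAt_vorticity (h : IsSteadyNavierStokes Ω v p) (hx : x ∈ Ω) :
    ContDiffAt ℝ ∞ (vorticity v) x :=
  (subAdjoint E).contDiff.contDiffAt.comp x
    ((h.contDiffAt_velocity x hx).fderiv_right (by norm_cast))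

theorem continuousOn_fderiv_vorticity (h : IsSteadyNavierStokes Ω v p) :
    ContinuousOn (fderiv ℝ (vorticity v)) Ω := fun _ hx =>
  ((h.contDiffAt_vorticity hx).continuousAt_fderiv (by simp)).continuousWithinAt

theorem interiorSup_fderiv_velocity_le (h : IsSteadyNavierStokes Ω v p)
    (hΩ : closedBall x₀ 1 ⊆ Ω) (hK : ∀ x ∈ closedBall x₀ 1, ‖v x‖ ≤ K)
    {τ : ℝ} (hτ : 0 < τ) (hτ' : τ ≤ 1 / 2) :
    interiorSup x₀ 1 1 (fderiv ℝ v) ≤ finrank ℝ E * K / τ +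
      2 * τ * (finrank ℝ E * interiorSup x₀ 1 2 (fderiv ℝ (vorticity v))) := by
  have hsub : ball x₀ 1 ⊆ Ω := ball_subset_closedBall.trans hΩ
  refine (interiorSup_fderiv_le (m := 0) (A := K)
    (N := finrank ℝ E * interiorSup x₀ 1 2 (fderiv ℝ (vorticity v))) one_pos hτ hτ'
    (fun x hx => (h.contDiffAt_velocity x (hsub hx)).of_le (by norm_cast))
    (fun x hx => by simpa using hK x (ball_subset_closedBall hx)) fun x hx => ?_).trans_eq
    (by ring)
  calc (1 - dist x x₀) ^ 2 * ‖Δ v x‖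
      ≤ (1 - dist x x₀) ^ 2 * (finrank ℝ E * ‖fderiv ℝ (vorticity v) x‖) := by
        gcongr
        exact h.norm_laplacian_velocity_le (hsub hx)
    _ = finrank ℝ E * ((1 - dist x x₀) ^ 2 * ‖fderiv ℝ (vorticity v) x‖) := by ring
    _ ≤ finrank ℝ E * interiorSup x₀ 1 2 (fderiv ℝ (vorticity v)) := by
        gcongr
        exact le_interiorSup (g := fderiv ℝ (vorticity v))
          (h.continuousOn_fderiv_vorticity.mono hΩ) hx

theorem interiorSup_fderiv_vorticity_le (h : IsSteadyNavierStokes Ω v p)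
    (hΩ : closedBall x₀ 1 ⊆ Ω) (hK : ∀ x ∈ closedBall x₀ 1, ‖v x‖ ≤ K)
    {τ : ℝ} (hτ : 0 < τ) (hτ' : τ ≤ 1 / 2) :
    interiorSup x₀ 1 2 (fderiv ℝ (vorticity v)) ≤
      4 * finrank ℝ E * interiorSup x₀ 1 1 (fderiv ℝ v) / τ +
        4 * τ * (interiorSup x₀ 1 2 (fderiv ℝ (vorticity v)) * K +
          2 * interiorSup x₀ 1 1 (fderiv ℝ v) ^ 2) := by
  have hsub : ball x₀ 1 ⊆ Ω := ball_subset_closedBall.trans hΩ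
  have hDv {x : E} (hx : x ∈ ball x₀ 1) :
      (1 - dist x x₀) ^ 1 * ‖fderiv ℝ v x‖ ≤ interiorSup x₀ 1 1 (fderiv ℝ v) :=
    le_interiorSup (h.continuousOn_fderiv_velocity.mono hΩ) hx
  have hDω {x : E} (hx : x ∈ ball x₀ 1) : (1 - dist x x₀) ^ 2 * ‖fderiv ℝ (vorticity v) x‖ ≤
      interiorSup x₀ 1 2 (fderiv ℝ (vorticity v)) :=
    le_interiorSup (g := fderiv ℝ (vorticity v)) (h.continuousOn_fderiv_vorticity.mono hΩ) hx
  set a := interiorSup x₀ 1 1 (fderiv ℝ v)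
  set b := interiorSup x₀ 1 2 (fderiv ℝ (vorticity v))
  refine (interiorSup_fderiv_le (m := 1) (A := 2 * a) (N := b * K + 2 * a ^ 2) one_pos hτ hτ'
    (fun x hx => (h.contDiffAt_vorticity (hsub hx)).of_le (by norm_cast))
    (fun x hx => ?_) fun x hx => ?_).trans_eq (by ring)
  · have hd : 0 < 1 - dist x x₀ := sub_pos.2 hx
    calc (1 - dist x x₀) ^ 1 * ‖vorticity v x‖
        ≤ (1 - dist x x₀) ^ 1 * (2 * ‖fderiv ℝ v x‖) := by gcongr; exact norm_subAdjoint_le _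
      _ = 2 * ((1 - dist x x₀) ^ 1 * ‖fderiv ℝ v x‖) := by ring
      _ ≤ 2 * a := by gcongr; exact hDv hx
  · have hd : 0 < 1 - dist x x₀ := sub_pos.2 hx
    have hd1 : 1 - dist x x₀ ≤ 1 := by linarith [dist_nonneg (x := x) (y := x₀)]
    have hb : 0 ≤ b := interiorSup_nonneg
    have hvx := hK x (ball_subset_closedBall hx)
    have : 0 ≤ K := (norm_nonneg _).trans hvx
    calc (1 - dist x x₀) ^ 3 * ‖Δ (vorticity v) x‖
        ≤ (1 - dist x x₀) ^ 3 *
            (‖fderiv ℝ (vorticity v) x‖ * ‖v x‖ + 2 * ‖fderiv ℝ v x‖ ^ 2) := by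
          gcongr
          exact h.norm_laplacian_vorticity_le (hsub hx)
      _ = (1 - dist x x₀) * ((1 - dist x x₀) ^ 2 * ‖fderiv ℝ (vorticity v) x‖ * ‖v x‖ +
            2 * ((1 - dist x x₀) ^ 1 * ‖fderiv ℝ v x‖) ^ 2) := by ring
      _ ≤ 1 * (b * K + 2 * a ^ 2) := by
          gcongr
          exacts [hDω hx, hDv hx]
      _ = b * K + 2 * a ^ 2 := one_mul _

end IsSteadyNavierStokes

variable (E) in
theorem exists_norm_fderiv_le_of_isSteadyNavierStokes (M : ℝ) :
    ∃ C, 0 ≤ C ∧ ∀ {Ω : Set E} {v : E → E} {p : E → ℝ} {x₀ : E} {K : ℝ},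
      IsSteadyNavierStokes Ω v p → closedBall x₀ 1 ⊆ Ω → K ≤ M →
      (∀ x ∈ closedBall x₀ 1, ‖v x‖ ≤ K) →
      ∀ x ∈ closedBall x₀ (1 / 2), ‖fderiv ℝ v x‖ ≤ C * K ∧ ‖fderiv ℝ p x‖ ≤ C * K := by
  obtain ⟨C, hC0, hC⟩ := exists_le_mul_of_forall_interpolation (Nat.cast_nonneg (finrank ℝ E)) M
  refine ⟨finrank ℝ E * (4 * C) + 2 * C * |M| + 2 * C, by positivity,
    fun {Ω v p x₀ K} h hΩ hKM hK x hx => ?_⟩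
  have hK0 : 0 ≤ K := (norm_nonneg _).trans (hK x₀ (mem_closedBall_self zero_le_one))
  obtain ⟨ha, hb⟩ := hC K _ _ hK0 hKM interiorSup_nonneg interiorSup_nonneg
    (fun τ => h.interiorSup_fderiv_velocity_le hΩ hK)
    (fun τ => h.interiorSup_fderiv_vorticity_le hΩ hK)
  have hxΩ : x ∈ Ω := hΩ (closedBall_subset_closedBall (by norm_num) hx)
  have hvx : ‖v x‖ ≤ |M| := (hK x (closedBall_subset_closedBall (by norm_num) hx)).trans
    (hKM.trans (le_abs_self M))
  have hDv : ‖fderiv ℝ v x‖ ≤ 2 * C * K := by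
    linarith [norm_le_interiorSup (m := 1) one_pos (h.continuousOn_fderiv_velocity.mono hΩ) hx]
  have hDω : ‖fderiv ℝ (vorticity v) x‖ ≤ 4 * C * K := by
    linarith [norm_le_interiorSup (m := 2) (g := fderiv ℝ (vorticity v)) one_pos
      (h.continuousOn_fderiv_vorticity.mono hΩ) hx]
  constructor
  · exact hDv.trans (mul_le_mul_of_nonneg_right (le_add_of_nonneg_left (by positivity)) hK0)
  · calc ‖fderiv ℝ p x‖
        ≤ finrank ℝ E * ‖fderiv ℝ (vorticity v) x‖ + ‖fderiv ℝ v x‖ * ‖v x‖ :=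
          h.norm_fderiv_pressure_le hxΩ
      _ ≤ finrank ℝ E * (4 * C * K) + 2 * C * K * |M| := by gcongr
      _ = (finrank ℝ E * (4 * C) + 2 * C * |M|) * K := by ring
      _ ≤ (finrank ℝ E * (4 * C) + 2 * C * |M| + 2 * C) * K :=
          mul_le_mul_of_nonneg_right (le_add_of_nonneg_right (by positivity)) hK0

end VelocityGradient

theorem nonneg_of_norm_le_div_add_norm {E F : Type*} [NormedAddCommGroup E] [NormedSpace ℝ E]
    [Nontrivial E] [NormedAddCommGroup F] {v : E → F} {R A : ℝ} (hR : 0 < R)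
    (hv : ∀ x ∈ (closedBall 0 R)ᶜ, ‖v x‖ ≤ A / (R + ‖x‖)) : 0 ≤ A := by
  obtain ⟨x, hx⟩ := exists_norm_eq E (by positivity : 0 ≤ 2 * R)
  have hxR : x ∈ (closedBall (0 : E) R)ᶜ := by
    simpa [hx] using lt_mul_of_one_lt_left hR one_lt_two
  simpa using (le_div_iff₀ (by positivity)).1 ((norm_nonneg _).trans (hv x hxR))

section HigherDerivatives

universe u

variable {E : Type u} [NormedAddCommGroup E] [InnerProductSpace ℝ E] [FiniteDimensional ℝ E]
  {Ω : Set E} {v : E → E} {p : E → ℝ} {x x₀ : E} {K : ℝ}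

variable (E) in
/-- The nonlinearity `N` of the Navier–Stokes system written as `Δ U = N (U, DU)` for the pair
`U = (v, p)` of velocity and pressure. -/
def navierStokesNonlinearity (q : (E × ℝ) × (E →L[ℝ] E × ℝ)) : E × ℝ :=
  ((.fst ℝ E ℝ ∘L q.2) q.1.1 + sharp E (.snd ℝ E ℝ ∘L q.2),
    -endTrace E ((.fst ℝ E ℝ ∘L q.2) ∘L (.fst ℝ E ℝ ∘L q.2)))

theorem contDiff_navierStokesNonlinearity : ContDiff ℝ ∞ (navierStokesNonlinearity E) := by
  unfold navierStokesNonlinearity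
  have hfst : ContDiff ℝ ∞ fun q : (E × ℝ) × (E →L[ℝ] E × ℝ) => .fst ℝ E ℝ ∘L q.2 :=
    contDiff_const.clm_comp contDiff_snd
  have hsnd : ContDiff ℝ ∞ fun q : (E × ℝ) × (E →L[ℝ] E × ℝ) => .snd ℝ E ℝ ∘L q.2 :=
    contDiff_const.clm_comp contDiff_snd
  exact ((hfst.clm_apply contDiff_fst.fst).add ((sharp E).contDiff.comp hsnd)).prodMk
    ((endTrace E).contDiff.comp (hfst.clm_comp hfst)).neg

theorem navierStokesNonlinearity_zero : navierStokesNonlinearity E 0 = 0 := by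
  simp [navierStokesNonlinearity]

namespace IsSteadyNavierStokes

theorem sub_const (h : IsSteadyNavierStokes Ω v p) (c : ℝ) :
    IsSteadyNavierStokes Ω v fun x => p x - c where
  isOpen := h.isOpen
  contDiffAt_velocity := h.contDiffAt_velocity
  contDiffAt_pressure x hx := (h.contDiffAt_pressure x hx).sub contDiffAt_const
  laplacian_velocity x hx := by
    rw [h.laplacian_velocity x hx, gradient, gradient, fderiv_sub_const]
  endTrace_fderiv := h.endTrace_fderiv

theorem hasFDerivAt_prodMk (h : IsSteadyNavierStokes Ω v p) (hx : x ∈ Ω) :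
    HasFDerivAt (fun y => (v y, p y)) ((fderiv ℝ v x).prod (fderiv ℝ p x)) x :=
  ((h.contDiffAt_velocity x hx).differentiableAt (by simp)).hasFDerivAt.prodMk
    ((h.contDiffAt_pressure x hx).differentiableAt (by simp)).hasFDerivAt

theorem laplacian_prodMk_eq (h : IsSteadyNavierStokes Ω v p) (hx : x ∈ Ω) :
    Δ (fun y => (v y, p y)) x =
      navierStokesNonlinearity E ((v x, p x), fderiv ℝ (fun y => (v y, p y)) x) := by
  rw [laplacian_prodMk ((h.contDiffAt_velocity x hx).of_le (by norm_cast))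
    ((h.contDiffAt_pressure x hx).of_le (by norm_cast)), h.laplacian_velocity x hx,
    h.laplacian_pressure hx, (h.hasFDerivAt_prodMk hx).fderiv]
  rfl

theorem norm_prodMk_fderiv_le (h : IsSteadyNavierStokes Ω v p) {B ρ : ℝ} (hρ : ρ ≤ 1)
    (hΩ : closedBall x₀ ρ ⊆ Ω) (hK : ∀ x ∈ closedBall x₀ ρ, ‖v x‖ ≤ K)
    (hB : ∀ x ∈ closedBall x₀ ρ, ‖fderiv ℝ v x‖ ≤ B ∧ ‖fderiv ℝ p x‖ ≤ B)
    (hx : x ∈ closedBall x₀ ρ) :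
    ‖((v x, p x - p x₀), fderiv ℝ (fun y => (v y, p y - p x₀)) x)‖ ≤ K + B := by
  have hx₀ : x₀ ∈ closedBall x₀ ρ := mem_closedBall_self (dist_nonneg.trans hx)
  have hp : ‖p x - p x₀‖ ≤ B * ‖x - x₀‖ :=
    (convex_closedBall x₀ ρ).norm_image_sub_le_of_norm_fderiv_le
      (fun y hy => (h.contDiffAt_pressure y (hΩ hy)).differentiableAt (by simp))
      (fun y hy => (hB y hy).2) hx₀ hx
  have hx1 : ‖x - x₀‖ ≤ 1 := (mem_closedBall_iff_norm.1 hx).trans hρ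
  obtain ⟨hDv, hDp⟩ := hB x hx
  have hB0 : 0 ≤ B := (norm_nonneg _).trans hDv
  have hvx := hK x hx
  have hK0 : 0 ≤ K := (norm_nonneg _).trans hvx
  rw [((h.sub_const (p x₀)).hasFDerivAt_prodMk (hΩ hx)).fderiv, fderiv_sub_const]
  simp only [Prod.norm_mk, ContinuousLinearMap.opNorm_prod, max_le_iff]
  exact ⟨⟨by linarith, by nlinarith⟩, by linarith, by linarith⟩

end IsSteadyNavierStokes

theorem exists_norm_iteratedFDeriv_pressure_le_unit (M : ℝ) (k : ℕ) :
    ∃ C, 0 ≤ C ∧ ∀ {Ω : Set E} {v : E → E} {p : E → ℝ} {x₀ : E} {K : ℝ},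
      IsSteadyNavierStokes Ω v p → closedBall x₀ 1 ⊆ Ω → K ≤ M →
      (∀ x ∈ closedBall x₀ 1, ‖v x‖ ≤ K) → ‖iteratedFDeriv ℝ (k + 1) p x₀‖ ≤ C * K := by
  obtain ⟨C₁, hC₁, hgrad⟩ := exists_norm_fderiv_le_of_isSteadyNavierStokes E M
  obtain ⟨C₂, hC₂⟩ := exists_norm_iteratedFDeriv_le_of_laplacian_eq (E := E) (k + 1)
    contDiff_navierStokesNonlinearity navierStokesNonlinearity_zero one_half_pos ((1 + C₁) * |M|)
  refine ⟨|C₂| * (1 + C₁), by positivity, fun {Ω v p x₀ K} h hΩ hKM hK => ?_⟩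
  have hK0 : 0 ≤ K := (norm_nonneg _).trans (hK x₀ (mem_closedBall_self zero_le_one))
  have hx₀ : x₀ ∈ closedBall x₀ (1 / 2) := mem_closedBall_self one_half_pos.le
  have hhalf : closedBall x₀ (1 / 2) ⊆ closedBall x₀ 1 :=
    closedBall_subset_closedBall (by norm_num)
  have hsub : closedBall x₀ (1 / 2) ⊆ Ω := hhalf.trans hΩ
  have hq := h.sub_const (p x₀)
  have hsmooth (x : E) (hx : x ∈ closedBall x₀ (1 / 2)) :
      ContDiffAt ℝ ∞ (fun y => (v y, p y - p x₀)) x :=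
    (h.contDiffAt_velocity x (hsub hx)).prodMk (hq.contDiffAt_pressure x (hsub hx))
  have hU := hC₂ x₀ ((1 + C₁) * K) _ (by gcongr; exact hKM.trans (le_abs_self M)) hsmooth
    (fun x hx => hq.laplacian_prodMk_eq (hsub hx)) fun x hx =>
      (h.norm_prodMk_fderiv_le one_half_lt_one.le hsub (fun y hy => hK y (hhalf hy))
        (hgrad h hΩ hKM hK) hx).trans_eq (by ring)
  have horder : ((k + 1 : ℕ) : WithTop ℕ∞) ≤ ∞ := by exact_mod_cast le_top
  calc ‖iteratedFDeriv ℝ (k + 1) p x₀‖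
      = ‖iteratedFDeriv ℝ (k + 1) (fun y => p y - p x₀) x₀‖ :=
        (norm_iteratedFDeriv_succ_sub_const p (p x₀) k x₀).symm
    _ ≤ ‖iteratedFDeriv ℝ (k + 1) (fun y => (v y, p y - p x₀)) x₀‖ :=
        norm_iteratedFDeriv_le_prodMk ((h.contDiffAt_velocity x₀ (hsub hx₀)).of_le horder)
          ((hq.contDiffAt_pressure x₀ (hsub hx₀)).of_le horder)
    _ ≤ C₂ * ((1 + C₁) * K) := hU
    _ ≤ |C₂| * ((1 + C₁) * K) := by gcongr; exact le_abs_self C₂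
    _ = |C₂| * (1 + C₁) * K := by ring

theorem exists_norm_iteratedFDeriv_pressure_le (M : ℝ) (k : ℕ) :
    ∃ C, 0 ≤ C ∧ ∀ {Ω : Set E} {v : E → E} {p : E → ℝ} {x₀ : E} {K r : ℝ},
      IsSteadyNavierStokes Ω v p → 0 < r → closedBall x₀ r ⊆ Ω → r * K ≤ M →
      (∀ x ∈ closedBall x₀ r, ‖v x‖ ≤ K) →
      ‖iteratedFDeriv ℝ (k + 1) p x₀‖ ≤ C * (r * K) / r ^ (k + 3) := by
  obtain ⟨C, hC0, hC⟩ := exists_norm_iteratedFDeriv_pressure_le_unit (E := E) M k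
  refine ⟨C, hC0, fun {Ω v p x₀ K r} h hr hΩ hKM hK => ?_⟩
  have hmaps (z : E) (hz : z ∈ closedBall 0 1) : x₀ + r • z ∈ closedBall x₀ r := by
    rw [mem_closedBall_zero_iff] at hz
    simpa [norm_smul, abs_of_pos hr] using mul_le_of_le_one_right hr.le hz
  have hunit := hC (h.comp_add_smul x₀ hr.ne') (fun z hz => hΩ (hmaps z hz)) hKM fun z hz => by
    rw [norm_smul, Real.norm_of_nonneg hr.le]
    exact mul_le_mul_of_nonneg_left (hK _ (hmaps z hz)) hr.le
  have hp : ContDiffAt ℝ (k + 1 : ℕ) (fun z => p (x₀ + r • z)) 0 :=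
    contDiffAt_comp_add_smul <| (h.contDiffAt_pressure _ (hΩ (hmaps 0 (by simp)))).of_le
      (by exact_mod_cast le_top)
  have hscale : iteratedFDeriv ℝ (k + 1) (fun z => r ^ 2 * p (x₀ + r • z)) 0 =
      r ^ (k + 3) • iteratedFDeriv ℝ (k + 1) p x₀ := by
    refine (iteratedFDeriv_const_smul_apply (a := r ^ 2) hp).trans ?_
    rw [iteratedFDeriv_comp_add_smul p x₀ hr.ne', smul_smul, smul_zero, add_zero]
    ring_nf
  rw [hscale, norm_smul, Real.norm_of_nonneg (by positivity)] at hunit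
  rwa [le_div_iff₀' (by positivity)]

theorem exists_norm_iteratedFDeriv_pressure_le_of_exterior (M : ℝ) (k : ℕ) :
    ∃ C, 0 ≤ C ∧ ∀ {R A : ℝ} {v : E → E} {p : E → ℝ}, 0 < R →
      IsSteadyNavierStokes (closedBall 0 R)ᶜ v p →
      (∀ x ∈ (closedBall 0 R)ᶜ, ‖v x‖ ≤ A / (R + ‖x‖)) → A ≤ M →
      ∀ x, 2 * R ≤ ‖x‖ → ‖iteratedFDeriv ℝ (k + 1) p x‖ ≤ C * A / (R + ‖x‖) ^ (k + 3) := by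
  obtain ⟨C, hC0, hC⟩ := exists_norm_iteratedFDeriv_pressure_le (E := E) M k
  refine ⟨C * 6 ^ (k + 3), by positivity, fun {R A v p} hR h hv hAM x hx => ?_⟩
  obtain ⟨r, hr⟩ : ∃ r, r = (R + ‖x‖) / 6 := ⟨_, rfl⟩
  have hr0 : 0 < r := by rw [hr]; positivity
  have hnorm (y : E) (hy : y ∈ closedBall x r) : r ≤ R + ‖y‖ ∧ R < ‖y‖ := by
    have := norm_le_norm_add_norm_sub' x y
    rw [mem_closedBall_iff_norm'] at hy
    constructor <;> linarith
  have : Nontrivial E := nontrivial_of_ne x 0 (norm_pos_iff.1 (by linarith))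
  have hA : 0 ≤ A := nonneg_of_norm_le_div_add_norm hR hv
  have hmem (y : E) (hy : y ∈ closedBall x r) : y ∈ (closedBall (0 : E) R)ᶜ := by
    simpa using (hnorm y hy).2
  have hrA : r * (A / r) = A := mul_div_cancel₀ A hr0.ne'
  have hle := hC h hr0 hmem (hrA.trans_le hAM) fun y hy => (hv y (hmem y hy)).trans <| by
    gcongr
    exact (hnorm y hy).1
  rw [hrA, hr, div_pow] at hle
  exact hle.trans_eq (by field_simp)

end HigherDerivatives

section LimitAtInfinity

variable {E F : Type*} [NormedAddCommGroup E] [NormedAddCommGroup F] [NormedSpace ℝ F]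
  {f : E → F} {x y z : E} {A S r : ℝ} {m : ℕ}

section NormedSpace

variable [NormedSpace ℝ E]

theorem norm_sub_le_of_forall_mem_segment (hA : 0 ≤ A) (hr : 0 < r) (hSr : S ≤ r)
    (hf : ∀ z, S ≤ ‖z‖ → DifferentiableAt ℝ f z)
    (hDf : ∀ z, S ≤ ‖z‖ → ‖fderiv ℝ f z‖ ≤ A / ‖z‖ ^ (m + 2))
    (hxy : ∀ z ∈ segment ℝ x y, r ≤ ‖z‖) : ‖f y - f x‖ ≤ A / r ^ (m + 2) * ‖y - x‖ := by
  refine (convex_segment x y).norm_image_sub_le_of_norm_fderiv_le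
    (fun z hz => hf z (hSr.trans (hxy z hz))) (fun z hz => ?_)
    (left_mem_segment ℝ x y) (right_mem_segment ℝ x y)
  refine (hDf z (hSr.trans (hxy z hz))).trans ?_
  gcongr
  exact hxy z hz

theorem dist_two_pow_smul_le (hA : 0 ≤ A) (hS : 0 < S)
    (hf : ∀ z, S ≤ ‖z‖ → DifferentiableAt ℝ f z)
    (hDf : ∀ z, S ≤ ‖z‖ → ‖fderiv ℝ f z‖ ≤ A / ‖z‖ ^ (m + 2)) (hx : S ≤ ‖x‖) (n : ℕ) :
    dist (f ((2 : ℝ) ^ n • x)) (f ((2 : ℝ) ^ (n + 1) • x)) ≤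
      2 * A / ‖x‖ ^ (m + 1) / 2 / 2 ^ n := by
  have hx0 : 0 < ‖x‖ := hS.trans_le hx
  have hdouble : (2 : ℝ) ^ (n + 1) • x - (2 : ℝ) ^ n • x = (2 : ℝ) ^ n • x := by module
  have hnorm : ‖(2 : ℝ) ^ n • x‖ = 2 ^ n * ‖x‖ := by simp [norm_smul]
  have hsegment (z : E) (hz : z ∈ segment ℝ ((2 : ℝ) ^ n • x) ((2 : ℝ) ^ (n + 1) • x)) :
      2 ^ n * ‖x‖ ≤ ‖z‖ := by
    rw [segment_eq_image', hdouble] at hz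
    obtain ⟨t, ht, rfl⟩ := hz
    have hsmul : (2 : ℝ) ^ n • x + t • (2 : ℝ) ^ n • x = (1 + t) • (2 : ℝ) ^ n • x := by module
    dsimp only
    rw [hsmul, norm_smul, hnorm]
    exact le_mul_of_one_le_left (by positivity)
      ((le_add_of_nonneg_right ht.1).trans (le_abs_self _))
  rw [dist_comm, dist_eq_norm]
  calc ‖f ((2 : ℝ) ^ (n + 1) • x) - f ((2 : ℝ) ^ n • x)‖
      ≤ A / (2 ^ n * ‖x‖) ^ (m + 2) * (2 ^ n * ‖x‖) := by
        have h := norm_sub_le_of_forall_mem_segment hA (by positivity)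
          (hx.trans (le_mul_of_one_le_left hx0.le (one_le_pow₀ one_le_two))) hf hDf hsegment
        rwa [hdouble, hnorm] at h
    _ = A / (2 ^ n * ‖x‖) ^ (m + 1) := by
        rw [pow_succ _ (m + 1)]
        field_simp
    _ ≤ A / (2 ^ n * ‖x‖ ^ (m + 1)) := by
        rw [mul_pow]
        gcongr
        exact le_self_pow₀ (one_le_pow₀ one_le_two) m.succ_ne_zero
    _ = 2 * A / ‖x‖ ^ (m + 1) / 2 / 2 ^ n := by field_simp

theorem exists_tendsto_two_pow_smul [CompleteSpace F] (hA : 0 ≤ A) (hS : 0 < S)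
    (hf : ∀ z, S ≤ ‖z‖ → DifferentiableAt ℝ f z)
    (hDf : ∀ z, S ≤ ‖z‖ → ‖fderiv ℝ f z‖ ≤ A / ‖z‖ ^ (m + 2)) (hx : S ≤ ‖x‖) :
    ∃ L, Tendsto (fun n : ℕ => f ((2 : ℝ) ^ n • x)) atTop (𝓝 L) ∧
      ‖f x - L‖ ≤ 2 * A / ‖x‖ ^ (m + 1) := by
  have hstep := dist_two_pow_smul_le hA hS hf hDf hx
  obtain ⟨L, hL⟩ := cauchySeq_tendsto_of_complete (cauchySeq_of_le_geometric_two hstep)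
  refine ⟨L, hL, ?_⟩
  simpa [dist_eq_norm] using dist_le_of_le_geometric_two_of_tendsto₀ hstep hL

end NormedSpace

variable [InnerProductSpace ℝ E]

theorem half_le_norm_of_mem_segment (hr : 0 ≤ r) (hx : r ≤ ‖x‖) (hy : r ≤ ‖y‖)
    (hxy : 0 ≤ ⟪x, y⟫) (hz : z ∈ segment ℝ x y) : r / 2 ≤ ‖z‖ := by
  obtain ⟨a, b, ha, hb, hab, rfl⟩ := hz
  refine le_of_sq_le_sq ?_ (norm_nonneg _)
  calc (r / 2) ^ 2 ≤ (a * r) ^ 2 + (b * r) ^ 2 := by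
        obtain rfl : b = 1 - a := by linarith
        nlinarith [sq_nonneg ((2 * a - 1) * r)]
    _ ≤ (a * ‖x‖) ^ 2 + 2 * (a * (b * ⟪x, y⟫)) + (b * ‖y‖) ^ 2 := by
        have : (a * r) ^ 2 ≤ (a * ‖x‖) ^ 2 := by gcongr
        have : (b * r) ^ 2 ≤ (b * ‖y‖) ^ 2 := by gcongr
        have : 0 ≤ a * (b * ⟪x, y⟫) := by positivity
        linarith
    _ = ‖a • x + b • y‖ ^ 2 := by
        rw [norm_add_sq_real, norm_smul, norm_smul, real_inner_smul_left, real_inner_smul_right,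
          Real.norm_of_nonneg ha, Real.norm_of_nonneg hb]

theorem tendsto_two_pow_smul_sub_two_pow_smul (hA : 0 ≤ A) (hS : 0 < S)
    (hf : ∀ z, S ≤ ‖z‖ → DifferentiableAt ℝ f z)
    (hDf : ∀ z, S ≤ ‖z‖ → ‖fderiv ℝ f z‖ ≤ A / ‖z‖ ^ (m + 2)) (hx : S ≤ ‖x‖) (hy : S ≤ ‖y‖)
    (hxy : 0 ≤ ⟪x, y⟫) :
    Tendsto (fun n : ℕ => f ((2 : ℝ) ^ n • y) - f ((2 : ℝ) ^ n • x)) atTop (𝓝 0) := by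
  have hnorm (n : ℕ) {w : E} (hw : S ≤ ‖w‖) : 2 ^ n * S ≤ ‖(2 : ℝ) ^ n • w‖ := by
    rw [norm_smul, Real.norm_of_nonneg (by positivity)]
    gcongr
  have hbound : ∀ᶠ n : ℕ in atTop, ‖f ((2 : ℝ) ^ n • y) - f ((2 : ℝ) ^ n • x)‖ ≤
      A * ‖y - x‖ / (S / 2) ^ (m + 2) * (1 / 2) ^ n := by
    filter_upwards [eventually_ge_atTop 1] with n hn
    have htwo : (2 : ℝ) ≤ 2 ^ n := le_self_pow₀ one_le_two (by lia)
    calc ‖f ((2 : ℝ) ^ n • y) - f ((2 : ℝ) ^ n • x)‖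
        ≤ A / (2 ^ n * S / 2) ^ (m + 2) * ‖(2 : ℝ) ^ n • y - (2 : ℝ) ^ n • x‖ :=
          norm_sub_le_of_forall_mem_segment hA (by positivity) (by nlinarith) hf hDf fun z hz =>
            half_le_norm_of_mem_segment (by positivity) (hnorm n hx) (hnorm n hy)
              (by rw [real_inner_smul_left, real_inner_smul_right]; positivity) hz
      _ = A * ‖y - x‖ / (S / 2) ^ (m + 2) / (2 ^ n) ^ (m + 1) := by
          rw [← smul_sub, norm_smul, Real.norm_of_nonneg (by positivity), mul_div_assoc, mul_pow,
            pow_succ (2 ^ n : ℝ) (m + 1)]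
          field_simp
      _ ≤ A * ‖y - x‖ / (S / 2) ^ (m + 2) / 2 ^ n := by
          gcongr
          exact le_self_pow₀ (one_le_pow₀ one_le_two) m.succ_ne_zero
      _ = A * ‖y - x‖ / (S / 2) ^ (m + 2) * (1 / 2) ^ n := by rw [one_div_pow, mul_one_div]
  refine squeeze_zero_norm' hbound ?_
  simpa using (tendsto_pow_atTop_nhds_zero_of_lt_one (r := (1 / 2 : ℝ)) (by norm_num)
    (by norm_num)).const_mul (A * ‖y - x‖ / (S / 2) ^ (m + 2))

theorem exists_norm_eq_and_inner_eq_zero (hE : 1 < finrank ℝ E) (x : E) (hr : 0 ≤ r) :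
    ∃ z : E, ‖z‖ = r ∧ ⟪x, z⟫ = 0 := by
  have : FiniteDimensional ℝ E := Module.finite_of_finrank_pos (by lia)
  have hrank := (ℝ ∙ x).finrank_add_finrank_orthogonal
  have hspan : finrank ℝ (ℝ ∙ x) ≤ 1 := by simpa using finrank_span_le_card (R := ℝ) {x}
  have : Nontrivial (ℝ ∙ x)ᗮ := nontrivial_of_finrank_pos (R := ℝ) (by lia)
  obtain ⟨z, hz⟩ := exists_norm_eq (ℝ ∙ x)ᗮ hr
  exact ⟨z, hz, Submodule.mem_orthogonal_singleton_iff_inner_right.1 z.2⟩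

-- The limits along two rays agree when the rays make an angle of at most `π / 2`; any two rays are
-- joined through one orthogonal to the first, up to sign, so there is a single limit.
theorem exists_forall_norm_sub_le_of_norm_fderiv_le [CompleteSpace F] (hE : 1 < finrank ℝ E)
    (hA : 0 ≤ A) (hS : 0 < S) (hf : ∀ z, S ≤ ‖z‖ → DifferentiableAt ℝ f z)
    (hDf : ∀ z, S ≤ ‖z‖ → ‖fderiv ℝ f z‖ ≤ A / ‖z‖ ^ (m + 2)) :
    ∃ L, ∀ x, S ≤ ‖x‖ → ‖f x - L‖ ≤ 2 * A / ‖x‖ ^ (m + 1) := by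
  choose! L hL hfL using fun x (hx : S ≤ ‖x‖) => exists_tendsto_two_pow_smul hA hS hf hDf hx
  have heq {x y : E} (hx : S ≤ ‖x‖) (hy : S ≤ ‖y‖) (hxy : 0 ≤ ⟪x, y⟫) : L y = L x :=
    sub_eq_zero.1 <| tendsto_nhds_unique ((hL y hy).sub (hL x hx))
      (tendsto_two_pow_smul_sub_two_pow_smul hA hS hf hDf hx hy hxy)
  obtain ⟨x₀, hx₀, -⟩ := exists_norm_eq_and_inner_eq_zero hE 0 hS.le
  refine ⟨L x₀, fun x hx => ?_⟩
  obtain ⟨z, hz, hxz⟩ := exists_norm_eq_and_inner_eq_zero hE x hS.le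
  have hLx : L x = L x₀ := by
    rcases le_total 0 ⟪z, x₀⟫ with h | h
    · exact (heq hx hz.ge hxz.ge).symm.trans (heq hz.ge hx₀.ge h).symm
    · have hz' : S ≤ ‖-z‖ := by rw [norm_neg, hz]
      exact (heq hx hz' (by simp [hxz])).symm.trans
        (heq hz' hx₀.ge (by simpa using h)).symm
  exact hLx ▸ hfL x hx

end LimitAtInfinity

section PressureDecay

universe u

variable {E : Type u} [NormedAddCommGroup E] [InnerProductSpace ℝ E] [FiniteDimensional ℝ E]

theorem exists_norm_pressure_sub_le_of_exterior (hE : 1 < finrank ℝ E) (M : ℝ) :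
    ∃ C, ∀ {R A : ℝ} {v : E → E} {p : E → ℝ}, 0 < R →
      IsSteadyNavierStokes (closedBall 0 R)ᶜ v p →
      (∀ x ∈ (closedBall 0 R)ᶜ, ‖v x‖ ≤ A / (R + ‖x‖)) → A ≤ M →
      ∃ p₀ : ℝ, ∀ x, 2 * R ≤ ‖x‖ → ‖p x - p₀‖ ≤ C * A / (R + ‖x‖) ^ 2 := by
  have : Nontrivial E := nontrivial_of_finrank_pos (R := ℝ) (by lia)
  obtain ⟨C, hC0, hC⟩ := exists_norm_iteratedFDeriv_pressure_le_of_exterior (E := E) M 0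
  refine ⟨8 * C, fun {R A v p} hR h hv hAM => ?_⟩
  have hA : 0 ≤ A := nonneg_of_norm_le_div_add_norm hR hv
  have hDp (x : E) (hx : 2 * R ≤ ‖x‖) : ‖fderiv ℝ p x‖ ≤ C * A / ‖x‖ ^ 3 := by
    have hx0 : 0 < ‖x‖ := by linarith
    rw [← norm_iteratedFDeriv_one]
    refine (hC hR h hv hAM x hx).trans ?_
    gcongr
    linarith
  have hp (x : E) (hx : 2 * R ≤ ‖x‖) : DifferentiableAt ℝ p x :=
    (h.contDiffAt_pressure x (by simpa using (by linarith : R < ‖x‖))).differentiableAt (by simp)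
  obtain ⟨p₀, hp₀⟩ := exists_forall_norm_sub_le_of_norm_fderiv_le hE (by positivity)
    (by positivity) hp hDp
  refine ⟨p₀, fun x hx => ?_⟩
  have hx0 : 0 < ‖x‖ := by linarith
  calc ‖p x - p₀‖ ≤ 2 * (C * A) / ‖x‖ ^ 2 := hp₀ x hx
    _ = 8 * C * A / (2 * ‖x‖) ^ 2 := by ring
    _ ≤ 8 * C * A / (R + ‖x‖) ^ 2 := by gcongr; linarith

theorem normalized_pressure_decay_general (hE : 1 < finrank ℝ E) (M : ℝ) :
    ∃ c : ℕ → ℝ, ∀ {R A : ℝ} {v : E → E} {p : E → ℝ}, 0 < R →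
      IsSteadyNavierStokes (closedBall 0 R)ᶜ v p →
      (∀ x ∈ (closedBall 0 R)ᶜ, ‖v x‖ ≤ A / (R + ‖x‖)) → A ≤ M →
      ∃ p₀ : ℝ, ∀ k x, 2 * R ≤ ‖x‖ →
        ‖iteratedFDeriv ℝ k (fun y => p y - p₀) x‖ ≤ c k * A / (R + ‖x‖) ^ (k + 2) := by
  obtain ⟨C₀, hC₀⟩ := exists_norm_pressure_sub_le_of_exterior hE M
  choose C _ hC using exists_norm_iteratedFDeriv_pressure_le_of_exterior (E := E) M
  refine ⟨fun | 0 => C₀ | k + 1 => C k, fun hR h hv hAM => ?_⟩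
  obtain ⟨p₀, hp₀⟩ := hC₀ hR h hv hAM
  refine ⟨p₀, fun k x hx => ?_⟩
  cases k with
  | zero => simpa only [norm_iteratedFDeriv_zero] using hp₀ x hx
  | succ k =>
    rw [norm_iteratedFDeriv_succ_sub_const, Nat.add_right_comm]
    exact hC k hR h hv hAM x hx

end PressureDecay

section Coordinates

variable {u : E3 → E3} {f : E3 → ℝ} {x : E3}

theorem basisFun_eq_ee (j : Fin 3) : EuclideanSpace.basisFun (Fin 3) ℝ j = ee j :=
  EuclideanSpace.basisFun_apply (Fin 3) ℝ j

theorem pd_apply_eq_fderiv (hu : DifferentiableAt ℝ u x) (i j : Fin 3) :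
    pd (fun y => u y i) j x = fderiv ℝ u x (ee j) i :=
  congr($((((EuclideanSpace.proj i).hasFDerivAt.comp x hu.hasFDerivAt)).fderiv) (ee j))

theorem sum_pd2_eq_laplacian (hf : ContDiffAt ℝ 2 f x) : ∑ j, pd2 f j x = Δ f x := by
  rw [laplacian_eq_sum_fderiv_fderiv (EuclideanSpace.basisFun (Fin 3) ℝ)]
  refine Finset.sum_congr rfl fun j _ => ?_
  rw [basisFun_eq_ee]
  exact congr($((((hasFDerivAt_fderiv hf).clm_apply (hasFDerivAt_const (ee j) x))).fderiv) (ee j))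
    |>.trans (by simp)

theorem gradient_apply (f : E3 → ℝ) (x : E3) (i : Fin 3) : ∇ f x i = pd f i x := by
  rw [← EuclideanSpace.inner_basisFun_real, inner_gradient_left, basisFun_eq_ee, pd]

theorem sum_smul_ee (w : E3) : ∑ j, w j • ee j = w := by
  simp_rw [← basisFun_eq_ee]
  exact (EuclideanSpace.basisFun (Fin 3) ℝ).sum_repr w

theorem sum_pd2_apply_eq_laplacian (hu : ContDiffAt ℝ 2 u x) (i : Fin 3) :
    ∑ j, pd2 (fun y => u y i) j x = Δ u x i :=
  (sum_pd2_eq_laplacian ((EuclideanSpace.proj (𝕜 := ℝ) i).contDiff.contDiffAt.comp x hu)).trans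
    (hu.laplacian_CLM_comp_left (l := EuclideanSpace.proj i))

theorem sum_mul_pd_apply_eq_fderiv (hu : DifferentiableAt ℝ u x) (w : E3) (i : Fin 3) :
    ∑ j, w j * pd (fun y => u y i) j x = fderiv ℝ u x w i := by
  conv_rhs => rw [← sum_smul_ee w, map_sum]
  simp [pd_apply_eq_fderiv hu]

theorem sum_pd_eq_endTrace_fderiv (hu : DifferentiableAt ℝ u x) :
    ∑ j, pd (fun y => u y j) j x = endTrace E3 (fderiv ℝ u x) := by
  rw [endTrace_eq_sum_inner (EuclideanSpace.basisFun (Fin 3) ℝ)]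
  exact Finset.sum_congr rfl fun i _ => by
    rw [EuclideanSpace.basisFun_inner, basisFun_eq_ee, pd_apply_eq_fderiv hu]

theorem IsNS.isSteadyNavierStokes {Ω : Set E3} {p : E3 → ℝ} (h : IsNS Ω u p) (hΩ : IsOpen Ω)
    (hu : ContDiffOn ℝ ∞ u Ω) (hp : ContDiffOn ℝ ∞ p Ω) : IsSteadyNavierStokes Ω u p := by
  have hux (x : E3) (hx : x ∈ Ω) : ContDiffAt ℝ ∞ u x := hu.contDiffAt (hΩ.mem_nhds hx)
  have hDu (x : E3) (hx : x ∈ Ω) : DifferentiableAt ℝ u x := (hux x hx).differentiableAt (by simp)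
  refine ⟨hΩ, hux, fun x hx => hp.contDiffAt (hΩ.mem_nhds hx), fun x hx => ?_, fun x hx => ?_⟩
  · ext i
    have hmomentum := h.1 x hx i
    rw [sum_pd2_apply_eq_laplacian ((hux x hx).of_le (by norm_cast)),
      sum_mul_pd_apply_eq_fderiv (hDu x hx)] at hmomentum
    rw [PiLp.add_apply, gradient_apply]
    linarith
  · rw [← sum_pd_eq_endTrace_fderiv (hDu x hx), h.2 x hx]

end Coordinates

theorem normalized_pressure_decay (M : ℝ) (hM : 0 < M) (k : ℕ) :
    ∃ c : ℝ, ∀ R₀ : ℝ, 0 < R₀ → ∀ (u : E3 → E3) (p : E3 → ℝ) (Cstar : ℝ),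
      ContDiffOn ℝ (⊤ : ℕ∞) u (closedBall (0 : E3) R₀)ᶜ →
      ContDiffOn ℝ (⊤ : ℕ∞) p (closedBall (0 : E3) R₀)ᶜ →
      IsNS (closedBall (0 : E3) R₀)ᶜ u p →
      (∀ x ∈ (closedBall (0 : E3) R₀)ᶜ, ‖u x‖ ≤ Cstar / (R₀ + ‖x‖)) →
      Cstar ≤ M →
      ∃ p₀ : ℝ, ∀ x : E3, 2 * R₀ ≤ ‖x‖ →
        ‖iteratedFDeriv ℝ k (fun y => p y - p₀) x‖ ≤ c * Cstar / (R₀ + ‖x‖) ^ (k + 2) := by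
  obtain ⟨c, hc⟩ := normalized_pressure_decay_general (E := E3) (by simp) M
  exact ⟨c k, fun R₀ hR u p Cstar hu hp hNS hdecay hCM =>
    (hc hR (hNS.isSteadyNavierStokes isClosed_closedBall.isOpen_compl hu hp) hdecay hCM).imp
      fun _ h => h k⟩
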